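/- arXiv:math/0610511 — 3 statements merged into one kernel-verified Lean document; each statement's English description precedes it below -/
import Mathlib

section
/- Let d ≥ 2 and let {Y_k : k ∈ ℕ^d} be a negatively associated field of identically distributed random variables with E[Y_1] = 0 and E[Y_1² log^{d-1}(|Y_1|) / log log (|Y_1|)] < ∞. Set T_n = Σ_{k ≤ n} Y_k and M_n = max_{k ≤ n} |T_k|. Then almost surely, limsup_{n → ∞} M_n / (2d |n| log log |n|)^{1/2} ≤ 20 (E[Y_1²])^{1/2}. -/
/-!
The proof compares `T_k` over dyadic blocks. A block with index `m` consists of the `k ≤ side m`,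
where `side m j = 2 ^ (m j + 1)`; its volume is `2 ^ M` with `M = lvol m`, there are at most
`M ^ (d - 1)` blocks of that volume, and `log log` of the volume is `log M` up to a constant.
By Borel-Cantelli it suffices to bound `|T_k|` for all `k` in a block outside an event whose
probabilities are summable over the blocks.

No maximal inequality for multi-indexed negatively associated sums is used. It is replaced by
chaining with adaptive truncation. On the grid with mesh a fraction `16 ^ (-s)` of the block the
variables are truncated at `lev M s = √(2 ^ M) / (log M * 4 ^ s)`, which decreases with `s`. Passing
from `s` to `s + 1` produces an increment of truncated variables over a thin shell, and a sum of
the discarded bands, which is controlled by its value on the largest shell rounded to the same grid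
point because bands are non-negative (`chaining`). Truncations and bands are monotone functions of
single variables, so negative association gives the moment generating function bound
`integral_prod_le`, hence the Bernstein-type bounds `bernstein_two` and `level_bound`; the
contributions of all levels `s ≥ S` add up to a small multiple of `scl M = √(2 ^ M log M)`
(`chain_event`). On the coarsest grid, level `S`, which has a bounded number of points, the same
inequality gives `3 √(2 d v |k| log M)` for any `v > 0` with `E Y² ≤ v` (`main_event`).

What is left is the excess of the `Y i` over `lev M S`. Fewer than `24 d` variables of the block
exceed this level except with probability `O(M ^ (-2 d))` (`count_le`), and none exceeds
`ε scl M` except with probability at most `2 ^ M P(|Y| > ε scl M)` (`excess_event`). The moment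
hypothesis is what makes `∑ M ^ (d - 1) 2 ^ M P(|Y| > ε scl M)` finite (`sum_weights_le`,
`summable_block_prob`). Altogether the normalised maximum is eventually at most `8 √v`, which is
below `20 √v`, and `v` decreases to `E Y²`.
-/

open MeasureTheory Filter Finset

noncomputable section

/-- `plog x = ln (max x e)`, the truncated logarithm used in the paper. -/
def plog (x : ℝ) : ℝ := Real.log (max x (Real.exp 1))

/-- A family of real random variables `X i`, `i ∈ S`, is *negatively associated* if for every
pair of disjoint finite subsets `A`, `B` of `S` and all coordinatewise non-decreasing functions
`f`, `g`, one has `Cov (f (X_i, i ∈ A), g (X_j, j ∈ B)) ≤ 0`, whenever the covariance exists. -/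
def NegAssocOn {Ω : Type} [MeasurableSpace Ω] (μ : Measure Ω) {ι : Type}
    (X : ι → Ω → ℝ) (S : Set ι) : Prop :=
  ∀ A B : Finset ι, ↑A ⊆ S → ↑B ⊆ S → Disjoint A B →
    ∀ (f : (↥A → ℝ) → ℝ) (g : (↥B → ℝ) → ℝ), Monotone f → Monotone g →
      Integrable (fun ω => f (fun i => X i ω)) μ →
      Integrable (fun ω => g (fun j => X j ω)) μ →
      Integrable (fun ω => f (fun i => X i ω) * g (fun j => X j ω)) μ →
      ∫ ω, f (fun i => X i ω) * g (fun j => X j ω) ∂μ ≤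
        (∫ ω, f (fun i => X i ω) ∂μ) * ∫ ω, g (fun j => X j ω) ∂μ

/-! ### Exponential inequalities under negative association -/

section NegAssoc

variable {Ω : Type} [MeasurableSpace Ω] {μ : Measure Ω} {d : ℕ} {Y : (Fin d → ℕ) → Ω → ℝ}

lemma integral_comp_eq (hmeas : ∀ k : Fin d → ℕ, 1 ≤ k → Measurable (Y k))
    (hid : ∀ k : Fin d → ℕ, 1 ≤ k → μ.map (Y k) = μ.map (Y 1))
    {F : ℝ → ℝ} (hF : Measurable F) {k : Fin d → ℕ} (hk : 1 ≤ k) :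
    ∫ ω, F (Y k ω) ∂μ = ∫ ω, F (Y 1 ω) ∂μ := by
  rw [← integral_map (hmeas k hk).aemeasurable hF.aestronglyMeasurable,
    ← integral_map (hmeas 1 le_rfl).aemeasurable hF.aestronglyMeasurable, hid k hk]

variable [IsProbabilityMeasure μ]

lemma measurable_of_monotone_or_antitone {F : ℝ → ℝ} (hF : Monotone F ∨ Antitone F) :
    Measurable F := hF.elim Monotone.measurable Antitone.measurable

/-- The form in which negative association is used: expectations of products of bounded
non-negative functions, all non-decreasing or all non-increasing, are at most what they would be
under independence. -/
lemma integral_prod_le (hmeas : ∀ k : Fin d → ℕ, 1 ≤ k → Measurable (Y k))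
    (hNA : NegAssocOn μ Y (Set.Ici 1))
    (hid : ∀ k : Fin d → ℕ, 1 ≤ k → μ.map (Y k) = μ.map (Y 1))
    {F : ℝ → ℝ} (hF : Monotone F ∨ Antitone F) (h0 : ∀ y, 0 ≤ F y) {B : ℝ} (hB : ∀ y, F y ≤ B)
    (A : Finset (Fin d → ℕ)) (hA : ∀ i ∈ A, 1 ≤ i) :
    ∫ ω, ∏ i ∈ A, F (Y i ω) ∂μ ≤ (∫ ω, F (Y 1 ω) ∂μ) ^ #A := by
  have hFm := measurable_of_monotone_or_antitone hF
  have hprodint : ∀ A : Finset (Fin d → ℕ), (∀ i ∈ A, 1 ≤ i) →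
      Integrable (fun ω => ∏ i ∈ A, F (Y i ω)) μ := by
    intro A hA
    refine Integrable.of_bound (C := B ^ #A) ?_ (ae_of_all _ fun ω => ?_)
    · refine (Finset.measurable_fun_prod _ fun i hi => ?_).aestronglyMeasurable
      exact hFm.comp (hmeas i (hA i hi))
    · rw [Real.norm_of_nonneg (prod_nonneg fun i _ => h0 _)]
      calc _ ≤ ∏ i ∈ A, B := prod_le_prod (fun i _ => h0 _) fun i _ => hB _
        _ = _ := by simp
  induction A using Finset.induction_on with
  | empty => simp
  | insert a A ha ih =>
    have hA' : ∀ i ∈ A, 1 ≤ i := fun i hi => hA i (mem_insert_of_mem hi)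
    have ha1 : 1 ≤ a := hA a (mem_insert_self _ _)
    have hI1 : Integrable (fun ω => F (Y a ω)) μ := by
      simpa using hprodint {a} (by simpa using ha1)
    have hI2 := hprodint A hA'
    have hI3 := hprodint _ hA
    simp only [prod_insert ha] at hI3 ⊢
    have key : ∫ ω, F (Y a ω) * ∏ i ∈ A, F (Y i ω) ∂μ ≤
        (∫ ω, F (Y a ω) ∂μ) * ∫ ω, ∏ i ∈ A, F (Y i ω) ∂μ := by
      have hsub : (({a} : Finset (Fin d → ℕ)) : Set (Fin d → ℕ)) ⊆ Set.Ici 1 := by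
        simpa using ha1
      have hsub' : (A : Set (Fin d → ℕ)) ⊆ Set.Ici 1 := fun i hi => hA' i hi
      have hdis : Disjoint {a} A := by simpa using ha
      have hps : ∀ ω, ∏ j : A, F (Y j ω) = ∏ i ∈ A, F (Y i ω) :=
        fun ω => Finset.prod_coe_sort A (fun i => F (Y i ω))
      rcases hF with hF | hF
      · have := hNA {a} A hsub hsub' hdis (fun u => F (u ⟨a, by simp⟩))
          (fun u => ∏ j : A, F (u j)) (fun u w h => hF (h _))
          (fun u w h => prod_le_prod (fun i _ => h0 _) fun i _ => hF (h _))
        simp only [hps] at this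
        exact this hI1 hI2 hI3
      · have := hNA {a} A hsub hsub' hdis (fun u => - F (u ⟨a, by simp⟩))
          (fun u => - ∏ j : A, F (u j)) (fun u w h => neg_le_neg (hF (h _)))
          (fun u w h => neg_le_neg (prod_le_prod (fun i _ => h0 _) fun i _ => hF (h _)))
        simp only [hps, neg_mul_neg, integral_neg] at this
        exact this hI1.neg hI2.neg hI3
    rw [card_insert_of_notMem ha, pow_succ']
    rw [integral_comp_eq hmeas hid hFm ha1] at key
    exact key.trans (mul_le_mul_of_nonneg_left (ih hA') (integral_nonneg fun ω => h0 _))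

lemma integrable_of_abs_le {h : ℝ → ℝ} (hm : Measurable h) {c : ℝ} (hc : ∀ y, |h y| ≤ c)
    {Z : Ω → ℝ} (hZ : Measurable Z) : Integrable (fun ω => h (Z ω)) μ :=
  Integrable.of_bound (hm.comp hZ).aestronglyMeasurable c (ae_of_all _ fun _ => hc _)

/-- One-sided Bernstein-type inequality, with the parameter of the exponential Markov inequality
left free. -/
lemma bernstein_one (hmeas : ∀ k : Fin d → ℕ, 1 ≤ k → Measurable (Y k))
    (hNA : NegAssocOn μ Y (Set.Ici 1))
    (hid : ∀ k : Fin d → ℕ, 1 ≤ k → μ.map (Y k) = μ.map (Y 1))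
    {h : ℝ → ℝ} (hh : Monotone h ∨ Antitone h) {c : ℝ} (hc : ∀ y, |h y| ≤ c)
    {v : ℝ} (hv : ∫ ω, h (Y 1 ω) ^ 2 ∂μ ≤ v)
    (A : Finset (Fin d → ℕ)) (hA : ∀ i ∈ A, 1 ≤ i) {V : ℝ} (hV : (#A : ℝ) ≤ V)
    {lam : ℝ} (hl : 0 ≤ lam) (hlc : 2 * lam * c ≤ 1) (y : ℝ) :
    μ.real {ω | y ≤ ∑ i ∈ A, (h (Y i ω) - ∫ ω, h (Y 1 ω) ∂μ)} ≤
      Real.exp (-lam * y + lam ^ 2 * V * v) := by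
  have hm := measurable_of_monotone_or_antitone hh
  set e := ∫ ω, h (Y 1 ω) ∂μ with he
  have hint : Integrable (fun ω => h (Y 1 ω)) μ := integrable_of_abs_le hm hc (hmeas 1 le_rfl)
  have hint2 : Integrable (fun ω => h (Y 1 ω) ^ 2) μ := by
    refine integrable_of_abs_le (h := fun y => h y ^ 2) (c := c ^ 2) (hm.pow_const 2) (fun y => ?_)
      (hmeas 1 le_rfl)
    rw [abs_pow]
    exact pow_le_pow_left₀ (abs_nonneg _) (hc y) 2
  have hec : |e| ≤ c := by
    have := norm_integral_le_of_norm_le_const (μ := μ) (f := fun ω => h (Y 1 ω)) (C := c)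
      (ae_of_all _ fun _ => hc _)
    simpa using this
  have hbd : ∀ y, |lam * (h y - e)| ≤ 1 := by
    intro y
    rw [abs_mul, abs_of_nonneg hl]
    have : |h y - e| ≤ 2 * c := (abs_sub _ _).trans (by linarith [hc y])
    nlinarith
  set F : ℝ → ℝ := fun y => Real.exp (lam * (h y - e)) with hFdef
  have hF : Monotone F ∨ Antitone F := by
    rcases hh with hh | hh
    · exact Or.inl fun a b hab => Real.exp_le_exp.2
        (mul_le_mul_of_nonneg_left (by linarith [hh hab]) hl)
    · exact Or.inr fun a b hab => Real.exp_le_exp.2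
        (mul_le_mul_of_nonneg_left (by linarith [hh hab]) hl)
  have hF0 : ∀ y, 0 ≤ F y := fun y => (Real.exp_pos _).le
  have hFB : ∀ y, F y ≤ Real.exp 1 := fun y => Real.exp_le_exp.2 ((le_abs_self _).trans (hbd y))
  have hprod := integral_prod_le hmeas hNA hid hF hF0 hFB A hA
  have hEF : ∫ ω, F (Y 1 ω) ∂μ ≤ Real.exp (lam ^ 2 * v) := by
    have hpt : ∀ y, F y ≤ 1 + lam * (h y - e) + lam ^ 2 * (h y ^ 2 - 2 * e * h y + e ^ 2) := by
      intro y
      have := (abs_le.1 (Real.abs_exp_sub_one_sub_id_le (hbd y))).2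
      simp only [hFdef]
      nlinarith
    have hi1 : Integrable (fun ω => 1 + lam * (h (Y 1 ω) - e)) μ :=
      (integrable_const _).add ((hint.sub (integrable_const _)).const_mul _)
    have hi0 : Integrable (fun ω => h (Y 1 ω) - e) μ := hint.sub (integrable_const _)
    have hi2 : Integrable (fun ω => h (Y 1 ω) ^ 2 - 2 * e * h (Y 1 ω)) μ :=
      hint2.sub (hint.const_mul _)
    have hi3 : Integrable (fun ω => lam ^ 2 * (h (Y 1 ω) ^ 2 - 2 * e * h (Y 1 ω) + e ^ 2)) μ :=
      (hi2.add (integrable_const _)).const_mul _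
    have hFi : Integrable (fun ω => F (Y 1 ω)) μ := integrable_of_abs_le
      (measurable_of_monotone_or_antitone hF)
      (fun y => by rw [abs_of_nonneg (hF0 y)]; exact hFB y) (hmeas 1 le_rfl)
    calc ∫ ω, F (Y 1 ω) ∂μ
        ≤ ∫ ω, (1 + lam * (h (Y 1 ω) - e)
            + lam ^ 2 * (h (Y 1 ω) ^ 2 - 2 * e * h (Y 1 ω) + e ^ 2)) ∂μ :=
          integral_mono hFi (hi1.add hi3) fun ω => hpt _
      _ = 1 + lam ^ 2 * (∫ ω, h (Y 1 ω) ^ 2 ∂μ - e ^ 2) := by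
          rw [integral_add hi1 hi3, integral_const_mul,
            integral_add hi2 (integrable_const _), integral_sub hint2 (hint.const_mul _),
            integral_const_mul, integral_add (integrable_const _)
              (hi0.const_mul _), integral_const_mul,
            integral_sub hint (integrable_const _)]
          simp only [integral_const, probReal_univ, smul_eq_mul, one_mul, ← he]
          ring
      _ ≤ 1 + lam ^ 2 * v := by
          have : (∫ ω, h (Y 1 ω) ^ 2 ∂μ) - e ^ 2 ≤ v := by nlinarith [sq_nonneg e]
          nlinarith [sq_nonneg lam]
      _ ≤ _ := by linarith [Real.add_one_le_exp (lam ^ 2 * v)]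
  have hv0 : 0 ≤ v := (integral_nonneg fun ω => sq_nonneg _).trans hv
  have hexp : ∀ ω, Real.exp (lam * ∑ i ∈ A, (h (Y i ω) - e)) = ∏ i ∈ A, F (Y i ω) := by
    intro ω
    rw [mul_sum, Real.exp_sum]
  have hI : Integrable (fun ω => Real.exp (lam * ∑ i ∈ A, (h (Y i ω) - e))) μ := by
    simp only [hexp]
    refine Integrable.of_bound (C := Real.exp 1 ^ #A) ?_ (ae_of_all _ fun ω => ?_)
    · refine (Finset.measurable_fun_prod _ fun i hi => ?_).aestronglyMeasurable
      exact (measurable_of_monotone_or_antitone hF).comp (hmeas i (hA i hi))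
    · rw [Real.norm_of_nonneg (prod_nonneg fun i _ => hF0 _)]
      calc _ ≤ ∏ i ∈ A, Real.exp 1 := prod_le_prod (fun i _ => hF0 _) fun i _ => hFB _
        _ = _ := by simp
  refine (ProbabilityTheory.measure_ge_le_exp_mul_mgf y hl hI).trans ?_
  rw [Real.exp_add]
  refine mul_le_mul_of_nonneg_left ?_ (Real.exp_pos _).le
  simp only [ProbabilityTheory.mgf, hexp]
  calc _ ≤ (∫ ω, F (Y 1 ω) ∂μ) ^ #A := hprod
    _ ≤ Real.exp (lam ^ 2 * v) ^ #A :=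
      pow_le_pow_left₀ (integral_nonneg fun ω => hF0 _) hEF _
    _ = Real.exp (#A * (lam ^ 2 * v)) := by rw [← Real.exp_nat_mul]
    _ ≤ _ := by
      refine Real.exp_le_exp.2 ?_
      have := mul_le_mul_of_nonneg_right hV (mul_nonneg (sq_nonneg lam) hv0)
      linarith

/-- Two-sided version; `t` absorbs the centring. -/
lemma bernstein_two (hmeas : ∀ k : Fin d → ℕ, 1 ≤ k → Measurable (Y k))
    (hNA : NegAssocOn μ Y (Set.Ici 1))
    (hid : ∀ k : Fin d → ℕ, 1 ≤ k → μ.map (Y k) = μ.map (Y 1))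
    {h : ℝ → ℝ} (hh : Monotone h ∨ Antitone h) {c : ℝ} (hc : ∀ y, |h y| ≤ c)
    {v : ℝ} (hv : ∫ ω, h (Y 1 ω) ^ 2 ∂μ ≤ v)
    (A : Finset (Fin d → ℕ)) (hA : ∀ i ∈ A, 1 ≤ i) {V : ℝ} (hV : (#A : ℝ) ≤ V)
    {lam : ℝ} (hl : 0 ≤ lam) (hlc : 2 * lam * c ≤ 1) (y : ℝ)
    {t : ℝ} (ht : V * |∫ ω, h (Y 1 ω) ∂μ| ≤ t) :
    μ.real {ω | y + t < |∑ i ∈ A, h (Y i ω)|} ≤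
      2 * Real.exp (-lam * y + lam ^ 2 * V * v) := by
  have h1 := bernstein_one hmeas hNA hid hh hc hv A hA hV hl hlc y
  have h2 := bernstein_one hmeas hNA hid (h := fun y => - h y) (c := c) (v := v)
    (hh.elim (fun H => Or.inr H.neg) (fun H => Or.inl H.neg)) (by simpa using hc)
    (by simpa using hv) A hA hV hl hlc y
  have hsub : {ω | y + t < |∑ i ∈ A, h (Y i ω)|} ⊆
      {ω | y ≤ ∑ i ∈ A, (h (Y i ω) - ∫ ω, h (Y 1 ω) ∂μ)} ∪
      {ω | y ≤ ∑ i ∈ A, (-h (Y i ω) - ∫ ω, -h (Y 1 ω) ∂μ)} := by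
    intro ω hω
    simp only [Set.mem_union, Set.mem_ofPred_eq, sum_sub_distrib, sum_const, nsmul_eq_mul,
      integral_neg, sum_neg_distrib] at hω ⊢
    set e := ∫ ω, h (Y 1 ω) ∂μ
    have : |(#A : ℝ) * e| ≤ t := by
      rw [abs_mul, Nat.abs_cast]
      exact (mul_le_mul_of_nonneg_right hV (abs_nonneg _)).trans ht
    have h3 := abs_le.1 this
    rcases lt_abs.1 hω with h | h
    · left; linarith
    · right; linarith
  calc _ ≤ _ := measureReal_mono hsub
    _ ≤ _ := measureReal_union_le _ _
    _ ≤ _ := by linarith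

/-- Few exceedances: if the expected number of `i ∈ A` with `h (Y i) = 1` is at most `1 / u`, then
`J` or more of them occur with probability at most `e * u ^ (-J)`. -/
lemma count_le (hmeas : ∀ k : Fin d → ℕ, 1 ≤ k → Measurable (Y k))
    (hNA : NegAssocOn μ Y (Set.Ici 1))
    (hid : ∀ k : Fin d → ℕ, 1 ≤ k → μ.map (Y k) = μ.map (Y 1))
    {h : ℝ → ℝ} (hh : Monotone h ∨ Antitone h) (h01 : ∀ y, h y = 0 ∨ h y = 1)
    (A : Finset (Fin d → ℕ)) (hA : ∀ i ∈ A, 1 ≤ i) {u : ℝ} (hu : 1 ≤ u)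
    (hp : #A * (∫ ω, h (Y 1 ω) ∂μ) * u ≤ 1) (J : ℕ) :
    μ.real {ω | (J : ℝ) ≤ ∑ i ∈ A, h (Y i ω)} ≤ Real.exp 1 * (u⁻¹) ^ J := by
  have hm := measurable_of_monotone_or_antitone hh
  have hu0 : 0 < u := by linarith
  have hl : 0 ≤ Real.log u := Real.log_nonneg hu
  have hint : Integrable (fun ω => h (Y 1 ω)) μ := integrable_of_abs_le hm (c := 1)
    (fun y => by rcases h01 y with H | H <;> simp [H]) (hmeas 1 le_rfl)
  have he0 : 0 ≤ ∫ ω, h (Y 1 ω) ∂μ :=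
    integral_nonneg fun ω => by rcases h01 (Y 1 ω) with H | H <;> simp [H]
  set e := ∫ ω, h (Y 1 ω) ∂μ with he
  set F : ℝ → ℝ := fun y => Real.exp (Real.log u * h y) with hFdef
  have hFeq : ∀ y, F y = 1 + (u - 1) * h y := by
    intro y
    rcases h01 y with H | H <;> simp [hFdef, H, Real.exp_log hu0]
  have hF : Monotone F ∨ Antitone F := by
    rcases hh with hh | hh
    · exact Or.inl fun a b hab => Real.exp_le_exp.2 (mul_le_mul_of_nonneg_left (hh hab) hl)
    · exact Or.inr fun a b hab => Real.exp_le_exp.2 (mul_le_mul_of_nonneg_left (hh hab) hl)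
  have hF0 : ∀ y, 0 ≤ F y := fun y => (Real.exp_pos _).le
  have hFB : ∀ y, F y ≤ u := fun y => by
    rw [hFeq]; rcases h01 y with H | H <;> simp [H, hu]
  have hprod := integral_prod_le hmeas hNA hid hF hF0 hFB A hA
  have hEF : ∫ ω, F (Y 1 ω) ∂μ ≤ Real.exp (u * e) := by
    simp only [hFeq]
    rw [integral_add (integrable_const _) (hint.const_mul _), integral_const_mul]
    simp only [integral_const, probReal_univ, smul_eq_mul, one_mul, ← he]
    have := Real.add_one_le_exp (u * e)
    nlinarith
  have hexp : ∀ ω, Real.exp (Real.log u * ∑ i ∈ A, h (Y i ω)) = ∏ i ∈ A, F (Y i ω) := by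
    intro ω
    rw [mul_sum, Real.exp_sum]
  have hI : Integrable (fun ω => Real.exp (Real.log u * ∑ i ∈ A, h (Y i ω))) μ := by
    simp only [hexp]
    refine Integrable.of_bound (C := u ^ #A) ?_ (ae_of_all _ fun ω => ?_)
    · refine (Finset.measurable_fun_prod _ fun i hi => ?_).aestronglyMeasurable
      exact (measurable_of_monotone_or_antitone hF).comp (hmeas i (hA i hi))
    · rw [Real.norm_of_nonneg (prod_nonneg fun i _ => hF0 _)]
      calc _ ≤ ∏ i ∈ A, u := prod_le_prod (fun i _ => hF0 _) fun i _ => hFB _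
        _ = _ := by simp
  refine (ProbabilityTheory.measure_ge_le_exp_mul_mgf (J : ℝ) hl hI).trans ?_
  have h1 : Real.exp (-Real.log u * J) = (u⁻¹) ^ J := by
    rw [mul_comm, Real.exp_nat_mul, Real.exp_neg, Real.exp_log hu0]
  rw [h1, mul_comm]
  refine mul_le_mul_of_nonneg_right ?_ (by positivity)
  simp only [ProbabilityTheory.mgf, hexp]
  calc _ ≤ (∫ ω, F (Y 1 ω) ∂μ) ^ #A := hprod
    _ ≤ Real.exp (u * e) ^ #A :=
      pow_le_pow_left₀ (integral_nonneg fun ω => hF0 _) hEF _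
    _ = Real.exp (#A * (u * e)) := by rw [← Real.exp_nat_mul]
    _ ≤ _ := Real.exp_le_exp.2 (by linarith)

end NegAssoc

/-! ### Dyadic blocks, grids and the chaining decomposition -/

section Grid

variable {d : ℕ}

/-- Upper corner of the dyadic block with index `m`. -/
def side (m : Fin d → ℕ) : Fin d → ℕ := fun j => 2 ^ (m j + 1)

/-- The base-two logarithm of the volume of the rectangle with upper corner `side m`. -/
def lvol (m : Fin d → ℕ) : ℕ := ∑ j, (m j + 1)

/-- Mesh of the grid of level `s`: a fraction `16 ^ (-s)` of `side m`, but at least `1` (the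
truncated subtraction in the exponent). -/
def mesh (m : Fin d → ℕ) (s : ℕ) : Fin d → ℕ := fun j => 2 ^ (m j + 1 - 4 * s)

/-- Coordinatewise rounding down to the grid of level `s`. -/
def rd (m : Fin d → ℕ) (s : ℕ) (k : Fin d → ℕ) : Fin d → ℕ :=
  fun j => k j / mesh m s j * mesh m s j

/-- The largest point of the block that `rd m s` may send to `κ`. -/
def up (m : Fin d → ℕ) (s : ℕ) (κ : Fin d → ℕ) : Fin d → ℕ :=
  fun j => min (κ j + (mesh m s j - 1)) (side m j)

/-- Grid points of level `s` in the block. -/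
def grid (m : Fin d → ℕ) (s : ℕ) : Finset (Fin d → ℕ) := (Iic (side m)).image (rd m s)

lemma prod_side (m : Fin d → ℕ) : ∏ j, side m j = 2 ^ lvol m := by
  simp [side, lvol, prod_pow_eq_pow_sum]

lemma mesh_pos (m : Fin d → ℕ) (s : ℕ) (j : Fin d) : 0 < mesh m s j := by simp [mesh]

lemma mesh_sub_one (m : Fin d → ℕ) (s : ℕ) (j : Fin d) : (mesh m s j - 1) * 16 ^ s ≤ side m j := by
  unfold mesh side
  have h16 : (16 : ℕ) ^ s = 2 ^ (4 * s) := by rw [pow_mul]; norm_num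
  rcases le_total (4 * s) (m j + 1) with h | h
  · calc _ ≤ 2 ^ (m j + 1 - 4 * s) * 16 ^ s := Nat.mul_le_mul_right _ (Nat.sub_le _ _)
      _ = 2 ^ (m j + 1) := by rw [h16, ← pow_add]; congr 1; omega
  · simp [Nat.sub_eq_zero_of_le h]

lemma rd_le (m : Fin d → ℕ) (s : ℕ) (k : Fin d → ℕ) : rd m s k ≤ k :=
  fun _ => Nat.div_mul_le_self _ _

lemma le_rd_add (m : Fin d → ℕ) (s : ℕ) (k : Fin d → ℕ) (j : Fin d) :
    k j ≤ rd m s k j + (mesh m s j - 1) := by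
  have h1 := Nat.div_add_mod' (k j) (mesh m s j)
  have h2 := Nat.mod_lt (k j) (mesh_pos m s j)
  simp only [rd]
  omega

lemma le_up (m : Fin d → ℕ) (s : ℕ) {k : Fin d → ℕ} (hk : k ≤ side m) : k ≤ up m s (rd m s k) :=
  fun j => le_min (le_rd_add m s k j) (hk j)

lemma rd_rd (m : Fin d → ℕ) (s : ℕ) (k : Fin d → ℕ) : rd m s (rd m (s + 1) k) = rd m s k := by
  funext j
  obtain ⟨q, hq⟩ : mesh m (s + 1) j ∣ mesh m s j := pow_dvd_pow _ (by omega)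
  have hp := mesh_pos m (s + 1) j
  simp only [rd, hq]
  rw [← Nat.div_div_eq_div_mul, ← Nat.div_div_eq_div_mul, Nat.mul_div_cancel _ hp]

lemma rd_eq_self (m : Fin d → ℕ) {s : ℕ} (hs : lvol m ≤ s) (k : Fin d → ℕ) : rd m s k = k := by
  funext j
  have : m j + 1 ≤ lvol m :=
    single_le_sum (f := fun j => m j + 1) (fun i _ => Nat.zero_le _) (mem_univ j)
  have h0 : m j + 1 - 4 * s = 0 := by omega
  simp [rd, mesh, h0]

lemma mem_grid {m : Fin d → ℕ} {s : ℕ} {k : Fin d → ℕ} (hk : k ≤ side m) : rd m s k ∈ grid m s :=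
  mem_image_of_mem _ (mem_Iic.2 hk)

lemma grid_le {m : Fin d → ℕ} {s : ℕ} {κ : Fin d → ℕ} (hκ : κ ∈ grid m s) : κ ≤ side m := by
  obtain ⟨k, hk, rfl⟩ := mem_image.1 hκ
  exact (rd_le _ _ _).trans (mem_Iic.1 hk)

lemma card_grid (m : Fin d → ℕ) (s : ℕ) : #(grid m s) ≤ (2 * 16 ^ s) ^ d := by
  have hsub : grid m s ⊆ Fintype.piFinset
      (fun j => (range (16 ^ s + 1)).image (fun q => q * mesh m s j)) := by
    intro κ hκ
    obtain ⟨k, hk, rfl⟩ := mem_image.1 hκ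
    rw [Fintype.mem_piFinset]
    intro j
    refine mem_image.2 ⟨k j / mesh m s j, ?_, rfl⟩
    rw [mem_range, Nat.lt_succ_iff]
    have h1 : k j ≤ 2 ^ (m j + 1) := mem_Iic.1 hk j
    refine Nat.div_le_of_le_mul ?_
    refine h1.trans ?_
    have h16 : (16 : ℕ) ^ s = 2 ^ (4 * s) := by rw [pow_mul]; norm_num
    rw [h16, mesh, ← pow_add]
    exact Nat.pow_le_pow_right (by norm_num) (by omega)
  refine (card_le_card hsub).trans ?_
  rw [Fintype.card_piFinset]
  calc _ ≤ ∏ _j : Fin d, (2 * 16 ^ s) := by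
        refine prod_le_prod' fun j _ => card_image_le.trans ?_
        rw [card_range]
        have : 1 ≤ 16 ^ s := Nat.one_le_pow _ _ (by norm_num)
        omega
    _ = _ := by simp

lemma card_Icc_sdiff (m : Fin d → ℕ) (s : ℕ) {κ κ' : Fin d → ℕ} (h2 : κ' ≤ side m)
    (h : ∀ j, (κ' j - κ j) * 16 ^ s ≤ side m j) :
    #(Icc 1 κ' \ Icc 1 κ) * 16 ^ s ≤ d * 2 ^ lvol m := by
  have hsub : Icc 1 κ' \ Icc 1 κ ⊆ univ.biUnion (fun j => Fintype.piFinset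
      (Function.update (fun i => Icc 1 (side m i)) j (Ioc (κ j) (κ' j)))) := by
    intro i hi
    rw [Finset.mem_sdiff, Finset.mem_Icc, mem_Icc] at hi
    obtain ⟨⟨hi1, hi2⟩, hi3⟩ := hi
    have : ¬ i ≤ κ := fun H => hi3 ⟨hi1, H⟩
    rw [Pi.le_def, not_forall] at this
    obtain ⟨j, hj⟩ := this
    refine mem_biUnion.2 ⟨j, mem_univ _, ?_⟩
    rw [Fintype.mem_piFinset]
    intro l
    by_cases hl : l = j
    · subst hl
      rw [Function.update_self, mem_Ioc]
      exact ⟨not_le.1 hj, hi2 l⟩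
    · rw [Function.update_of_ne hl, mem_Icc]
      exact ⟨hi1 l, (hi2 l).trans (h2 l)⟩
  calc _ ≤ (∑ j : Fin d, #(Fintype.piFinset
          (Function.update (fun i => Icc 1 (side m i)) j (Ioc (κ j) (κ' j))))) * 16 ^ s :=
        Nat.mul_le_mul_right _ ((card_le_card hsub).trans card_biUnion_le)
    _ = ∑ j : Fin d, #(Fintype.piFinset
          (Function.update (fun i => Icc 1 (side m i)) j (Ioc (κ j) (κ' j)))) * 16 ^ s := by
        rw [sum_mul]
    _ ≤ ∑ _j : Fin d, 2 ^ lvol m := by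
        refine sum_le_sum fun j _ => ?_
        rw [Fintype.card_piFinset, ← prod_side, ← mul_prod_erase univ _ (mem_univ j),
          ← mul_prod_erase univ (side m) (mem_univ j), Function.update_self, Nat.card_Ioc,
          mul_right_comm]
        refine Nat.mul_le_mul (h j) (le_of_eq (prod_congr rfl fun i hi => ?_))
        rw [Function.update_of_ne (ne_of_mem_erase hi), Nat.card_Icc, Nat.add_sub_cancel]
    _ = _ := by simp

lemma card_up_sdiff (m : Fin d → ℕ) (s : ℕ) (κ : Fin d → ℕ) :
    #(Icc 1 (up m s κ) \ Icc 1 κ) * 16 ^ s ≤ d * 2 ^ lvol m := by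
  refine card_Icc_sdiff m s (fun j => min_le_right _ _) fun j => ?_
  refine le_trans (Nat.mul_le_mul_right _ ?_) (mesh_sub_one m s j)
  have := min_le_left (κ j + (mesh m s j - 1)) (side m j)
  simp only [up]
  omega

lemma card_rd_sdiff (m : Fin d → ℕ) (s : ℕ) {κ : Fin d → ℕ} (hκ : κ ≤ side m) :
    #(Icc 1 κ \ Icc 1 (rd m s κ)) * 16 ^ s ≤ d * 2 ^ lvol m := by
  refine card_Icc_sdiff m s hκ fun j => ?_
  refine le_trans (Nat.mul_le_mul_right _ ?_) (mesh_sub_one m s j)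
  have := le_rd_add m s κ j
  omega

/-- Chaining with adaptive truncation. `f s` stands for the field truncated at level `s`; passing
from level `s` to `s + 1` refines the grid and lowers the truncation. The increments along the
grid are controlled through `a`, the discarded part `f s - f (s + 1)` through `b` (in absolute
value, hence uniformly over all points rounded to the same grid point). -/
lemma chaining (m : Fin d → ℕ) (f : ℕ → (Fin d → ℕ) → ℝ) (a b : ℕ → ℝ) (S : ℕ)
    (hchain : ∀ s ∈ Ico S (S + lvol m), ∀ κ ∈ grid m (s + 1),
      |∑ i ∈ Icc 1 κ \ Icc 1 (rd m s κ), f (s + 1) i| ≤ a s)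
    (hbr : ∀ s ∈ Ico S (S + lvol m), ∀ κ ∈ grid m s,
      ∑ i ∈ Icc 1 (up m s κ) \ Icc 1 κ, |f s i - f (s + 1) i| ≤ b s)
    {k : Fin d → ℕ} (hk : k ≤ side m) :
    |∑ i ∈ Icc 1 k, f S i| ≤
      |∑ i ∈ Icc 1 (rd m S k), f S i| + ∑ s ∈ Ico S (S + lvol m), (a s + b s) := by
  have hsd : ∀ {p q : Fin d → ℕ}, p ≤ q → ∀ g : (Fin d → ℕ) → ℝ,
      ∑ i ∈ Icc 1 q, g i = ∑ i ∈ Icc 1 q \ Icc 1 p, g i + ∑ i ∈ Icc 1 p, g i :=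
    fun h g => (sum_sdiff (Icc_subset_Icc_right h)).symm
  have step : ∀ r, r ≤ lvol m → |∑ i ∈ Icc 1 k \ Icc 1 (rd m (S + lvol m - r) k),
      f (S + lvol m - r) i| ≤ ∑ s ∈ Ico (S + lvol m - r) (S + lvol m), (a s + b s) := by
    intro r
    induction r with
    | zero =>
      intro _
      rw [Nat.sub_zero, rd_eq_self m (by omega)]
      simp
    | succ r ih =>
      intro hr
      have ih := ih (by omega)
      set s := S + lvol m - (r + 1) with hs
      have hs1 : S + lvol m - r = s + 1 := by omega
      rw [hs1] at ih
      have hmem : s ∈ Ico S (S + lvol m) := by rw [mem_Ico]; omega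
      rw [sum_eq_sum_Ico_succ_bot (by omega)]
      have hle : rd m s k ≤ rd m (s + 1) k := by
        rw [← rd_rd m s k]; exact rd_le _ _ _
      have e1 : ∑ i ∈ Icc 1 k \ Icc 1 (rd m s k), f s i =
          ∑ i ∈ Icc 1 k \ Icc 1 (rd m s k), (f s i - f (s + 1) i) +
          (∑ i ∈ Icc 1 (rd m (s + 1) k) \ Icc 1 (rd m s k), f (s + 1) i +
          ∑ i ∈ Icc 1 k \ Icc 1 (rd m (s + 1) k), f (s + 1) i) := by
        have h1 := hsd (rd_le m (s + 1) k) (f (s + 1))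
        have h2 := hsd (rd_le m s k) (f (s + 1))
        have h3 := hsd hle (f (s + 1))
        rw [sum_sub_distrib]
        linarith
      have e2 : |∑ i ∈ Icc 1 k \ Icc 1 (rd m s k), (f s i - f (s + 1) i)| ≤ b s := by
        refine (abs_sum_le_sum_abs _ _).trans (le_trans ?_ (hbr s hmem _ (mem_grid hk)))
        exact sum_le_sum_of_subset_of_nonneg
          (sdiff_subset_sdiff (Icc_subset_Icc_right (le_up m s hk)) subset_rfl)
          fun _ _ _ => abs_nonneg _
      have e3 := hchain s hmem _ (mem_grid hk)
      rw [rd_rd] at e3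
      rw [e1]
      refine (abs_add_le _ _).trans ?_
      have := abs_add_le (∑ i ∈ Icc 1 (rd m (s + 1) k) \ Icc 1 (rd m s k), f (s + 1) i)
        (∑ i ∈ Icc 1 k \ Icc 1 (rd m (s + 1) k), f (s + 1) i)
      linarith
  have h := step (lvol m) le_rfl
  rw [Nat.add_sub_cancel] at h
  rw [hsd (rd_le m S k)]
  refine (abs_add_le _ _).trans ?_
  linarith

end Grid

/-! ### The truncated logarithm -/

section Plog

lemma one_le_plog (x : ℝ) : 1 ≤ plog x := by
  rw [plog, Real.le_log_iff_exp_le (lt_of_lt_of_le (Real.exp_pos 1) (le_max_right _ _))]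
  exact le_max_right _ _

lemma plog_pos (x : ℝ) : 0 < plog x := one_pos.trans_le (one_le_plog x)

lemma plog_mono : Monotone plog := fun _ _ h =>
  Real.log_le_log (lt_of_lt_of_le (Real.exp_pos 1) (le_max_right _ _)) (max_le_max_right _ h)

lemma log_le_plog {x : ℝ} (hx : 0 < x) : Real.log x ≤ plog x :=
  Real.log_le_log hx (le_max_left _ _)

lemma plog_eq {x : ℝ} (hx : Real.exp 1 ≤ x) : plog x = Real.log x := by
  rw [plog, max_eq_left hx]

lemma plog_le_of {x b : ℝ} (h1 : 1 ≤ b) (h2 : Real.log x ≤ b) : plog x ≤ b := by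
  rcases le_total (Real.exp 1) x with h | h
  · rwa [plog_eq h]
  · rw [plog, max_eq_right h, Real.log_exp]; exact h1

lemma plog_le_two_sqrt {t : ℝ} (ht : 1 ≤ t) : plog t ≤ 2 * √t := by
  have h1 : 1 ≤ √t := Real.one_le_sqrt.2 ht
  refine plog_le_of (by linarith) ?_
  have h2 := Real.log_le_sub_one_of_pos (x := √t) (by linarith)
  rw [Real.log_sqrt (by linarith)] at h2
  linarith

/-- `t / plog t` is increasing up to constants. -/
lemma mul_plog_le {M t C : ℝ} (hM : 1 ≤ M) (ht : 1 ≤ t) (h : M ≤ C * t) :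
    M * plog t ≤ (C + 1) * t * plog M := by
  have hM0 : 0 < M := by linarith
  have ht0 : 0 < t := by linarith
  have hpM := one_le_plog M
  have h1 : plog t ≤ plog M * (1 + t / M) := by
    refine plog_le_of ?_ ?_
    · have : 0 < t / M := by positivity
      nlinarith
    · have h2 : Real.log t = Real.log M + Real.log (t / M) := by
        rw [Real.log_div ht0.ne' hM0.ne']; ring
      have h3 := Real.log_le_sub_one_of_pos (x := t / M) (by positivity)
      have h4 := log_le_plog hM0
      have : 0 < t / M := by positivity
      nlinarith
  calc M * plog t ≤ M * (plog M * (1 + t / M)) := by gcongr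
    _ = (M + t) * plog M := by field_simp
    _ ≤ _ := by gcongr; linarith

end Plog

/-! ### Truncation functions and tail moments -/

section Trunc

/-- Truncation of `y` to `[-c, c]`. -/
def trunc (c y : ℝ) : ℝ := max (-c) (min y c)

/-- The part of `y` between the levels `c'` and `c`, when `c' ≤ c`. -/
def band (c c' y : ℝ) : ℝ := max (min y c - c') 0

lemma trunc_mono (c : ℝ) : Monotone (trunc c) := fun _ _ h =>
  max_le_max_left _ (min_le_min_right _ h)

lemma band_mono (c c' : ℝ) : Monotone (band c c') := fun _ _ h =>
  max_le_max_right _ (sub_le_sub_right (min_le_min_right _ h) _)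

lemma abs_trunc_le {c : ℝ} (hc : 0 ≤ c) (y : ℝ) : |trunc c y| ≤ c := by
  rw [trunc, abs_le]
  exact ⟨le_max_left _ _, max_le (by linarith) (min_le_right _ _)⟩

lemma abs_trunc_le_abs {c : ℝ} (hc : 0 ≤ c) (y : ℝ) : |trunc c y| ≤ |y| := by
  rw [trunc]
  grind

lemma abs_sub_trunc_le {c : ℝ} (hc : 0 < c) (y : ℝ) :
    |y - trunc c y| ≤ if c < |y| then y ^ 2 / c else 0 := by
  have h : |y - trunc c y| ≤ if c < |y| then |y| else 0 := by
    rw [trunc]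
    grind
  refine h.trans ?_
  split_ifs with h1
  · rw [le_div_iff₀ hc, ← sq_abs]
    nlinarith [abs_nonneg y]
  · rfl

lemma sub_trunc_abs_le {c : ℝ} (hc : 0 < c) (y : ℝ) :
    |y - trunc c y| ≤ |y| * ((if c < y then 1 else 0) + if y < -c then 1 else 0) := by
  rw [trunc]
  split_ifs <;> grind

lemma band_nonneg (c c' y : ℝ) : 0 ≤ band c c' y := le_max_right _ _

lemma band_le {c c' : ℝ} (hc : 0 ≤ c) (hc' : 0 ≤ c') (y : ℝ) : band c c' y ≤ c := by
  rw [band]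
  grind

lemma band_le_abs {c c' : ℝ} (hc' : 0 ≤ c') (y : ℝ) : band c c' y ≤ |y| := by
  rw [band]
  grind

lemma band_le_sq {c c' : ℝ} (hc' : 0 < c') (y : ℝ) :
    band c c' y ≤ if c' < |y| then y ^ 2 / c' else 0 := by
  have h : band c c' y ≤ if c' < |y| then |y| else 0 := by
    rw [band]
    grind
  refine h.trans ?_
  split_ifs with h1
  · rw [le_div_iff₀ hc', ← sq_abs]
    nlinarith [abs_nonneg y]
  · rfl

lemma abs_trunc_sub_trunc {c c' : ℝ} (hc' : 0 ≤ c') (h : c' ≤ c) (y : ℝ) :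
    |trunc c y - trunc c' y| ≤ band c c' y + band c c' (-y) := by
  rw [trunc, trunc, band, band]
  grind

variable {Ω : Type} [MeasurableSpace Ω] {μ : Measure Ω}

/-- The tail second moment `E[Z² ; |Z| > c]`. -/
def tail (μ : Measure Ω) (Z : Ω → ℝ) (c : ℝ) : ℝ := ∫ ω, (if c < |Z ω| then Z ω ^ 2 else 0) ∂μ

variable {Z : Ω → ℝ}

lemma integrable_tail (hZ : Measurable Z) (h2 : Integrable (fun ω => Z ω ^ 2) μ) (c : ℝ) :
    Integrable (fun ω => if c < |Z ω| then Z ω ^ 2 else 0) μ := by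
  refine h2.mono' ?_ (ae_of_all _ fun ω => ?_)
  · exact (Measurable.ite (measurableSet_lt measurable_const hZ.abs) (hZ.pow_const 2)
      measurable_const).aestronglyMeasurable
  · split_ifs <;> simp [sq_nonneg]

lemma tail_nonneg (c : ℝ) : 0 ≤ tail μ Z c :=
  integral_nonneg fun ω => by dsimp only; split_ifs <;> positivity

lemma tail_anti (hZ : Measurable Z) (h2 : Integrable (fun ω => Z ω ^ 2) μ) :
    Antitone (tail μ Z) := by
  intro c c' h
  refine integral_mono (integrable_tail hZ h2 _) (integrable_tail hZ h2 _) fun ω => ?_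
  dsimp only
  split_ifs with h1 h3
  · rfl
  · linarith
  · positivity
  · rfl

lemma tail_le (hZ : Measurable Z) (h2 : Integrable (fun ω => Z ω ^ 2) μ) (c : ℝ) :
    tail μ Z c ≤ ∫ ω, Z ω ^ 2 ∂μ := by
  refine integral_mono (integrable_tail hZ h2 _) h2 fun ω => ?_
  dsimp only
  split_ifs
  · rfl
  · positivity

lemma abs_integral_le_tail (hZ : Measurable Z) (h2 : Integrable (fun ω => Z ω ^ 2) μ) {c : ℝ}
    {H : Ω → ℝ} (hH : ∀ ω, |H ω| ≤ if c < |Z ω| then Z ω ^ 2 / c else 0) :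
    |∫ ω, H ω ∂μ| ≤ tail μ Z c / c := by
  rw [tail, ← integral_div]
  rw [← Real.norm_eq_abs]
  refine norm_integral_le_of_norm_le ((integrable_tail hZ h2 c).div_const c)
    (ae_of_all _ fun ω => ?_)
  rw [Real.norm_eq_abs]
  refine (hH ω).trans (le_of_eq ?_)
  split_ifs <;> simp

lemma integral_ind_le_tail [IsFiniteMeasure μ] (hZ : Measurable Z)
    (h2 : Integrable (fun ω => Z ω ^ 2) μ)
    {c : ℝ} (hc : 0 < c) {H : Ω → ℝ} (hHm : Measurable H)
    (hH0 : ∀ ω, 0 ≤ H ω) (hH : ∀ ω, H ω ≤ if c < |Z ω| then 1 else 0) :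
    ∫ ω, H ω ∂μ ≤ tail μ Z c / c ^ 2 := by
  rw [tail, ← integral_div]
  refine integral_mono ?_ ((integrable_tail hZ h2 c).div_const _) fun ω => (hH ω).trans ?_
  · refine Integrable.of_bound hHm.aestronglyMeasurable 1 (ae_of_all _ fun ω => ?_)
    rw [Real.norm_of_nonneg (hH0 ω)]
    refine (hH ω).trans ?_
    split_ifs <;> norm_num
  · split_ifs with h
    · rw [le_div_iff₀ (by positivity), ← sq_abs (Z ω)]
      nlinarith [abs_nonneg (Z ω)]
    · simp

lemma tail_le_div (hZ : Measurable Z) (h2 : Integrable (fun ω => Z ω ^ 2) μ)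
    (h3 : Integrable (fun ω => Z ω ^ 2 * √(plog |Z ω|)) μ) (c : ℝ) :
    tail μ Z c ≤ (∫ ω, Z ω ^ 2 * √(plog |Z ω|) ∂μ) / √(plog c) := by
  have hp := Real.sqrt_pos.2 (plog_pos c)
  rw [le_div_iff₀ hp, tail, ← integral_mul_const]
  refine integral_mono ((integrable_tail hZ h2 c).mul_const _) h3 fun ω => ?_
  dsimp only
  split_ifs with h
  · exact mul_le_mul_of_nonneg_left (Real.sqrt_le_sqrt (plog_mono h.le)) (sq_nonneg _)
  · rw [zero_mul]; positivity

lemma moment_lower {d : ℕ} (hd : 2 ≤ d) (y : ℝ) :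
    y ^ 2 * √(plog |y|) ≤ 2 * (y ^ 2 * plog |y| ^ (d - 1) / plog (plog |y|)) := by
  set t := plog |y|
  have ht : 1 ≤ t := one_le_plog _
  have h1 : plog t ≤ 2 * √t := plog_le_two_sqrt ht
  have h2 : t ≤ t ^ (d - 1) := le_self_pow₀ ht (by omega)
  have h3 := Real.mul_self_sqrt (zero_le_one.trans ht)
  rw [← mul_div_assoc, le_div_iff₀ (plog_pos t)]
  have h4 : √t * plog t ≤ 2 * t ^ (d - 1) := by nlinarith [Real.sqrt_nonneg t]
  nlinarith [mul_le_mul_of_nonneg_left h4 (sq_nonneg y)]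

lemma integrable_sq_sqrt {d : ℕ} (hd : 2 ≤ d) (hZ : Measurable Z)
    (hmom : Integrable (fun ω => (Z ω) ^ 2 * (plog |Z ω|) ^ (d - 1) / plog (plog |Z ω|)) μ) :
    Integrable (fun ω => Z ω ^ 2 * √(plog |Z ω|)) μ := by
  refine (hmom.const_mul 2).mono' ?_ (ae_of_all _ fun ω => ?_)
  · exact ((hZ.pow_const 2).mul
      (plog_mono.measurable.comp hZ.abs).sqrt).aestronglyMeasurable
  · rw [Real.norm_of_nonneg (by positivity)]
    exact moment_lower hd _

lemma integrable_sq (hZ : Measurable Z)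
    (h3 : Integrable (fun ω => Z ω ^ 2 * √(plog |Z ω|)) μ) :
    Integrable (fun ω => Z ω ^ 2) μ := by
  refine h3.mono' (hZ.pow_const 2).aestronglyMeasurable (ae_of_all _ fun ω => ?_)
  rw [Real.norm_of_nonneg (by positivity)]
  have : 1 ≤ √(plog |Z ω|) := Real.one_le_sqrt.2 (one_le_plog _)
  nlinarith [sq_nonneg (Z ω)]

/-- Pointwise form of the summability of `P(|Z| > ε √(2 ^ M log M))` with weights `M ^ (d-1) 2 ^ M`,
the number of dyadic blocks of volume `2 ^ M` times their volume. -/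
lemma sum_weights_le {d : ℕ} (hd : 2 ≤ d) {ε : ℝ} (hε : 0 < ε) :
    ∃ C : ℝ, 0 ≤ C ∧ ∀ (y : ℝ) (F : Finset ℕ),
      (∀ M ∈ F, 1 ≤ M ∧ ε * √(2 ^ M * plog M) < |y|) →
      ∑ M ∈ F, (M : ℝ) ^ (d - 1) * 2 ^ M ≤ C * (y ^ 2 * plog |y| ^ (d - 1) / plog (plog |y|)) := by
  set C1 : ℝ := 4 * (1 + |Real.log ε|) with hC1
  have hC1p : 0 < C1 := by positivity
  refine ⟨2 * (C1 ^ (d - 2) * (C1 + 1)) / ε ^ 2, by positivity, fun y F hF => ?_⟩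
  rcases F.eq_empty_or_nonempty with rfl | hne
  · rw [sum_empty]
    have := plog_pos |y|
    have := plog_pos (plog |y|)
    positivity
  -- the weights grow geometrically, so the sum is of the order of its largest term
  set N := F.max' hne with hN
  obtain ⟨hN1, hNy⟩ := hF N (F.max'_mem hne)
  have hN1' : (1 : ℝ) ≤ N := by exact_mod_cast hN1
  have hpN := one_le_plog (N : ℝ)
  set t := plog |y| with ht
  have ht1 : 1 ≤ t := one_le_plog _
  have h1 : ∑ M ∈ F, (M : ℝ) ^ (d - 1) * 2 ^ M ≤ (N : ℝ) ^ (d - 1) * (2 * 2 ^ N) := by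
    calc ∑ M ∈ F, (M : ℝ) ^ (d - 1) * 2 ^ M ≤ ∑ M ∈ F, (N : ℝ) ^ (d - 1) * 2 ^ M := by
          refine sum_le_sum fun M hM => ?_
          have : (M : ℝ) ≤ N := by exact_mod_cast F.le_max' M hM
          gcongr
      _ ≤ ∑ M ∈ range (N + 1), (N : ℝ) ^ (d - 1) * 2 ^ M := by
          refine sum_le_sum_of_subset_of_nonneg (fun M hM => ?_) fun _ _ _ => by positivity
          rw [mem_range, Nat.lt_succ_iff]
          exact F.le_max' M hM
      _ ≤ _ := by
          rw [← mul_sum, geom_sum_eq (by norm_num)]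
          refine mul_le_mul_of_nonneg_left ?_ (by positivity)
          rw [pow_succ]
          norm_num
          linarith
  have hy0 : 0 < |y| := lt_of_le_of_lt (by positivity) hNy
  have h2 : ε ^ 2 * (2 ^ N * plog N) ≤ y ^ 2 := by
    have := mul_self_le_mul_self (by positivity) hNy.le
    rw [← sq, ← sq, sq_abs, mul_pow, Real.sq_sqrt (by positivity)] at this
    exact this
  have h3 : (N : ℝ) ≤ C1 * t := by
    have h4 : ε ^ 2 * 2 ^ N ≤ |y| ^ 2 := by
      rw [sq_abs]
      refine le_trans ?_ h2
      gcongr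
      have : (0 : ℝ) < 2 ^ N := by positivity
      nlinarith
    have h5 := Real.log_le_log (by positivity) h4
    rw [Real.log_mul (by positivity) (by positivity), Real.log_pow, Real.log_pow, Real.log_pow] at h5
    have h6 := log_le_plog hy0
    have h7 := Real.log_two_gt_d9
    have h8 := neg_abs_le (Real.log ε)
    push_cast at h5
    have h9 := abs_nonneg (Real.log ε)
    rw [← ht] at h6
    have h10 : (N : ℝ) * (1 / 2) ≤ N * Real.log 2 := by
      refine mul_le_mul_of_nonneg_left (by linarith) (by positivity)
    rw [hC1]
    nlinarith
  have h4 : (N : ℝ) * plog t ≤ (C1 + 1) * t * plog N := mul_plog_le hN1' ht1 h3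
  have hpt := plog_pos t
  obtain ⟨e, rfl⟩ : ∃ e, d = e + 2 := ⟨d - 2, by omega⟩
  simp only [show e + 2 - 1 = e + 1 by omega, Nat.add_sub_cancel] at h1 ⊢
  refine h1.trans ?_
  have h5 : (N : ℝ) ^ e ≤ C1 ^ e * t ^ e := by
    rw [← mul_pow]; exact pow_le_pow_left₀ (by positivity) h3 e
  rw [div_mul_div_comm, le_div_iff₀ (by positivity)]
  have h6 : (N : ℝ) ^ (e + 1) * plog t ≤ (C1 ^ e * (C1 + 1)) * t ^ (e + 1) * plog N := by
    calc (N : ℝ) ^ (e + 1) * plog t = (N : ℝ) ^ e * (N * plog t) := by ring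
      _ ≤ (C1 ^ e * t ^ e) * ((C1 + 1) * t * plog N) := by gcongr
      _ = _ := by ring
  calc (N : ℝ) ^ (e + 1) * (2 * 2 ^ N) * (ε ^ 2 * plog t)
      = 2 * (ε ^ 2 * 2 ^ N) * ((N : ℝ) ^ (e + 1) * plog t) := by ring
    _ ≤ 2 * (ε ^ 2 * 2 ^ N) * ((C1 ^ e * (C1 + 1)) * t ^ (e + 1) * plog N) := by gcongr
    _ = 2 * (C1 ^ e * (C1 + 1)) * ((ε ^ 2 * (2 ^ N * plog N)) * t ^ (e + 1)) := by ring
    _ ≤ 2 * (C1 ^ e * (C1 + 1)) * (y ^ 2 * t ^ (e + 1)) := by gcongr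

end Trunc

/-! ### Levels of truncation and their asymptotics -/

section Levels

/-- Truncation level used on the grid of level `s` in a block of volume `2 ^ M`. -/
def lev (M s : ℕ) : ℝ := √(2 ^ M) / (plog M * 4 ^ s)

/-- Order of magnitude of the law of the iterated logarithm in a block of volume `2 ^ M`. -/
def scl (M : ℕ) : ℝ := √(2 ^ M * plog M)

lemma lev_pos (M s : ℕ) : 0 < lev M s := by
  have := plog_pos (M : ℝ)
  unfold lev
  positivity

lemma scl_pos (M : ℕ) : 0 < scl M := by
  have := plog_pos (M : ℝ)
  unfold scl
  positivity

lemma scl_eq (M : ℕ) : scl M = √(2 ^ M) * √(plog M) := Real.sqrt_mul (by positivity) _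

lemma lev_succ_le (M s : ℕ) : lev M (s + 1) ≤ lev M s := by
  have := plog_pos (M : ℝ)
  unfold lev
  rw [pow_succ]
  gcongr
  have : (0 : ℝ) < 4 ^ s := by positivity
  linarith

lemma eventually_plog_pow_le (K : ℝ) (r : ℕ) : ∀ᶠ M : ℕ in atTop, K * plog M ^ r ≤ M := by
  have h := (Real.isLittleO_pow_log_id_atTop (n := r)).bound (c := (|K| + 1)⁻¹) (by positivity)
  have h' := (tendsto_natCast_atTop_atTop (R := ℝ)).eventually h
  have h'' := (tendsto_natCast_atTop_atTop (R := ℝ)).eventually (eventually_ge_atTop (Real.exp 1))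
  filter_upwards [h', h''] with M hM hM2
  rw [plog_eq hM2]
  have hl : 0 ≤ Real.log M := Real.log_natCast_nonneg M
  simp only [id, norm_pow, Real.norm_of_nonneg hl, RCLike.norm_natCast] at hM
  rw [inv_mul_eq_div, le_div_iff₀ (by positivity)] at hM
  have : 0 ≤ Real.log M ^ r := by positivity
  nlinarith [le_abs_self K]

lemma tendsto_plog_natCast : Tendsto (fun M : ℕ => plog M) atTop atTop := by
  refine tendsto_atTop_mono' atTop ?_ (Real.tendsto_log_atTop.comp tendsto_natCast_atTop_atTop)
  filter_upwards [eventually_gt_atTop 0] with M hM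
  exact log_le_plog (by exact_mod_cast hM)

variable {Ω : Type} [MeasurableSpace Ω] {μ : Measure Ω} {Z : Ω → ℝ}

/-- The tail second moment beyond a level that is `√(2 ^ M)` up to powers of `log M` decays like
`M ^ (-1/2)`, which beats `M ^ (-1/4)` and any power of `log M`. -/
lemma tail_asymp (hZ : Measurable Z) (h2 : Integrable (fun ω => Z ω ^ 2) μ)
    (h3 : Integrable (fun ω => Z ω ^ 2 * √(plog |Z ω|)) μ) {A C : ℝ} (hA : 0 < A) (hC : 0 < C) :
    ∀ᶠ M : ℕ in atTop,
      A * plog M ^ 2 * tail μ Z (√(2 ^ M) / (C * plog M ^ 3)) * √√M ≤ 1 := by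
  set I := ∫ ω, Z ω ^ 2 * √(plog |Z ω|) ∂μ with hI
  have hI0 : 0 ≤ I := integral_nonneg fun ω => by positivity
  filter_upwards [eventually_plog_pow_le (8 * C) 3,
    eventually_plog_pow_le ((A * I * √8) ^ 4) 8, eventually_gt_atTop 0] with M h1 h4 hM
  have hM0 : (0 : ℝ) < M := by exact_mod_cast hM
  have hp := plog_pos (M : ℝ)
  set c := √(2 ^ M) / (C * plog M ^ 3) with hc
  have hexp : Real.exp (M / 8) ≤ c := by
    rw [hc, le_div_iff₀ (by positivity)]
    have e1 : C * plog M ^ 3 ≤ Real.exp (M / 8) := by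
      have := Real.add_one_le_exp ((M : ℝ) / 8)
      linarith
    have e2 : Real.exp (M / 8) * Real.exp (M / 8) ≤ √(2 ^ M) := by
      refine Real.le_sqrt_of_sq_le ?_
      have : (2 : ℝ) ^ M = Real.exp (M * Real.log 2) := by
        rw [Real.exp_nat_mul, Real.exp_log (by norm_num)]
      rw [this, ← Real.exp_add, ← Real.exp_nat_mul]
      refine Real.exp_le_exp.2 ?_
      have := Real.log_two_gt_d9
      push_cast
      nlinarith
    calc _ ≤ Real.exp (M / 8) * Real.exp (M / 8) := by gcongr
      _ ≤ _ := e2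
  have hpc : (M : ℝ) / 8 ≤ plog c := by
    refine le_trans ?_ (log_le_plog ((Real.exp_pos _).trans_le hexp))
    rwa [Real.le_log_iff_exp_le ((Real.exp_pos _).trans_le hexp)]
  have ht : tail μ Z c ≤ I * √8 / √M := by
    refine (tail_le_div hZ h2 h3 c).trans ?_
    have : √M / √8 ≤ √(plog c) := by
      rw [← Real.sqrt_div hM0.le]; exact Real.sqrt_le_sqrt hpc
    have h8 : 0 < √(M : ℝ) / √8 := by positivity
    calc I / √(plog c) ≤ I / (√M / √8) := by gcongr
      _ = _ := by field_simp
  have h5 : A * I * √8 * plog M ^ 2 ≤ √√M := by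
    refine Real.le_sqrt_of_sq_le (Real.le_sqrt_of_sq_le ?_)
    calc _ = (A * I * √8) ^ 4 * plog M ^ 8 := by ring
      _ ≤ _ := h4
  have hs : √√(M : ℝ) * √√M = √M := Real.mul_self_sqrt (Real.sqrt_nonneg _)
  have hs0 : 0 < √(M : ℝ) := Real.sqrt_pos.2 hM0
  calc A * plog M ^ 2 * tail μ Z c * √√M ≤ A * plog M ^ 2 * (I * √8 / √M) * √√M := by gcongr
    _ = (A * I * √8 * plog M ^ 2) * √√M / √M := by ring
    _ ≤ √√M * √√M / √M := by gcongr
    _ = 1 := by rw [hs, div_self hs0.ne']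

/-- The means of the truncated variables and of the bands are negligible at every level: for
`2 ^ s ≤ log M` by the decay of the tail moment, and for larger `s` because the shells are thin. -/
lemma mean_cond (hZ : Measurable Z) (h2 : Integrable (fun ω => Z ω ^ 2) μ) {v η : ℝ} (hη : 0 < η)
    (hv : ∫ ω, Z ω ^ 2 ∂μ ≤ v) (d M s : ℕ) (hA : 4 * d * v ≤ η * √(plog M))
    (hB : 4 * d * √(plog M) * tail μ Z (√(2 ^ M) / (4 * plog M ^ 3)) ≤ η) :
    d * 2 ^ M / 16 ^ s * (tail μ Z (lev M (s + 1)) / lev M (s + 1)) ≤ η / 2 ^ s * scl M := by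
  have hp1 := one_le_plog (M : ℝ)
  set l := plog (M : ℝ) with hl
  have hp : 0 < l := by linarith
  have hls : √l * √l = l := Real.mul_self_sqrt hp.le
  have hls0 : 0 < √l := Real.sqrt_pos.2 hp
  set T := tail μ Z (lev M (s + 1)) with hT
  have hT0 : 0 ≤ T := tail_nonneg _
  have h42 : (4 : ℝ) ^ s = 2 ^ s * 2 ^ s := by rw [← mul_pow]; norm_num
  have h164 : (16 : ℝ) ^ s = 4 ^ s * 4 ^ s := by rw [← mul_pow]; norm_num
  have h2s : (1 : ℝ) ≤ 2 ^ s := one_le_pow₀ (by norm_num)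
  have key : 4 * d * √l * T ≤ η * 2 ^ s := by
    rcases le_total l (2 ^ s) with h | h
    · have : T ≤ v := (tail_le hZ h2 _).trans hv
      calc 4 * d * √l * T ≤ 4 * d * √l * v := by gcongr
        _ = (4 * d * v) * √l := by ring
        _ ≤ η * √l * √l := by gcongr
        _ = η * l := by rw [mul_assoc, hls]
        _ ≤ _ := by gcongr
    · have h1 : √(2 ^ M) / (4 * l ^ 3) ≤ lev M (s + 1) := by
        unfold lev
        rw [← hl, pow_succ (4 : ℝ) s, h42]
        refine div_le_div_of_nonneg_left (by positivity) (by positivity) ?_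
        calc l * (2 ^ s * 2 ^ s * 4) ≤ l * (l * l * 4) := by gcongr
          _ = _ := by ring
      have h3 := tail_anti hZ h2 h1
      calc 4 * d * √l * T ≤ 4 * d * √l * tail μ Z (√(2 ^ M) / (4 * l ^ 3)) := by gcongr
        _ ≤ η := hB
        _ ≤ η * 2 ^ s := by nlinarith
  have hn : √((2 : ℝ) ^ M) * √(2 ^ M) = 2 ^ M := Real.mul_self_sqrt (by positivity)
  have hn0 : 0 < √((2 : ℝ) ^ M) := by positivity
  calc d * 2 ^ M / 16 ^ s * (T / lev M (s + 1))
      = (4 * d * √l * T) * (√(2 ^ M) * √l / 4 ^ s) := by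
        rw [lev, ← hl, h164, pow_succ (4 : ℝ) s]
        generalize √((2 : ℝ) ^ M) = r at hn hn0
        rw [← hn]
        field_simp
        rw [Real.sq_sqrt hp.le]
    _ ≤ (η * 2 ^ s) * (√(2 ^ M) * √l / 4 ^ s) := by gcongr
    _ = _ := by
        rw [scl_eq, ← hl, h42]
        field_simp

variable [IsProbabilityMeasure μ] {d : ℕ} {Y : (Fin d → ℕ) → Ω → ℝ}

/-- Deviation bound at level `s` of the chaining, for a set carrying at most a fraction
`d * 16 ^ (-s)` of the block. -/
lemma level_bound (hd : 2 ≤ d) (hmeas : ∀ k : Fin d → ℕ, 1 ≤ k → Measurable (Y k))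
    (hNA : NegAssocOn μ Y (Set.Ici 1))
    (hid : ∀ k : Fin d → ℕ, 1 ≤ k → μ.map (Y k) = μ.map (Y 1))
    {v η : ℝ} (hη : 0 < η) {M s : ℕ} {h : ℝ → ℝ} (hh : Monotone h ∨ Antitone h)
    (hc : ∀ y, |h y| ≤ lev M s) (hv : ∫ ω, h (Y 1 ω) ^ 2 ∂μ ≤ v)
    (hmean : d * 2 ^ M / 16 ^ s * |∫ ω, h (Y 1 ω) ∂μ| ≤ η / 2 ^ s * scl M)
    (A : Finset (Fin d → ℕ)) (hA : ∀ i ∈ A, 1 ≤ i) (hcard : #A * 16 ^ s ≤ d * 2 ^ M)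
    (hl : 32 * d ≤ η * √(plog M)) (hs : 32 * d ^ 2 * (s + 1) * v ≤ η ^ 2 * 4 ^ s) :
    μ.real {ω | 2 * (η / 2 ^ s * scl M) < |∑ i ∈ A, h (Y i ω)|} ≤
      2 * Real.exp (-(8 * d * (s + 1) * plog M)) := by
  have hp := plog_pos (M : ℝ)
  have hd0 : (0 : ℝ) < d := by exact_mod_cast (by omega : 0 < d)
  set l := plog (M : ℝ) with hldef
  set y := η / 2 ^ s * scl M with hy
  have hy0 : 0 < y := by have := scl_pos M; positivity
  set Q : ℝ := 8 * d * (s + 1) * l with hQ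
  have hQ0 : 0 < Q := by positivity
  have hcard' : (#A : ℝ) ≤ d * 2 ^ M / 16 ^ s := by
    rw [le_div_iff₀ (by positivity)]
    exact_mod_cast hcard
  have h42 : (4 : ℝ) ^ s = 2 ^ s * 2 ^ s := by rw [← mul_pow]; norm_num
  have h164 : (16 : ℝ) ^ s = 4 ^ s * 4 ^ s := by rw [← mul_pow]; norm_num
  have hls : √l * √l = l := Real.mul_self_sqrt hp.le
  have hls0 : 0 < √l := Real.sqrt_pos.2 hp
  have hs2 : ((s : ℝ) + 1) ≤ 2 ^ s := by exact_mod_cast Nat.lt_two_pow_self (n := s)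
  -- with `lam = 2 * Q / y` the linear term of the exponent is `-2 * Q`, the quadratic one at most `Q`
  have hlc : 2 * (2 * Q / y) * lev M s ≤ 1 := by
    have : 2 * (2 * Q / y) * lev M s = (32 * d) * (s + 1) / (2 ^ s * (η * √l)) := by
      rw [hQ, hy, lev, scl_eq, ← hldef, h42]
      field_simp
      ring
    rw [this, div_le_one (by positivity), mul_comm (2 ^ s : ℝ)]
    gcongr
  have hb := bernstein_two hmeas hNA hid hh hc hv A hA hcard' (lam := 2 * Q / y) (by positivity)
    hlc y hmean
  rw [← two_mul] at hb
  refine hb.trans (mul_le_mul_of_nonneg_left (Real.exp_le_exp.2 ?_) (by norm_num))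
  have e1 : -(2 * Q / y) * y = -2 * Q := by field_simp
  have e2 : (2 * Q / y) ^ 2 * (d * 2 ^ M / 16 ^ s) * v ≤ Q := by
    have hy2 : y ^ 2 = η ^ 2 / 4 ^ s * (2 ^ M * l) := by
      rw [hy, scl, mul_pow, Real.sq_sqrt (by positivity), h42]
      ring
    rw [div_pow, hy2, h164]
    have : (2 * Q) ^ 2 / (η ^ 2 / 4 ^ s * (2 ^ M * l)) * (d * 2 ^ M / (4 ^ s * 4 ^ s)) * v
        = Q * ((32 * d ^ 2 * (s + 1) * v) / (η ^ 2 * 4 ^ s)) := by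
      rw [hQ]
      field_simp
      ring
    rw [this]
    have h1 : (32 * d ^ 2 * (s + 1) * v) / (η ^ 2 * 4 ^ s) ≤ 1 := by
      rw [div_le_one (by positivity)]; exact hs
    nlinarith
  rw [e1]
  linarith

end Levels

/-! ### Probability of a bad block -/

section Block

variable {Ω : Type} [MeasurableSpace Ω] {μ : Measure Ω} {d : ℕ} {Y : (Fin d → ℕ) → Ω → ℝ}

lemma measureReal_exists_le {ι : Type} (F : Finset ι) (P : ι → Ω → Prop) {b : ℝ}
    (h : ∀ i ∈ F, μ.real {ω | P i ω} ≤ b) : μ.real {ω | ∃ i ∈ F, P i ω} ≤ #F * b := by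
  have : {ω | ∃ i ∈ F, P i ω} = ⋃ i ∈ F, {ω | P i ω} := by ext; simp
  rw [this]
  refine (measureReal_biUnion_finset_le F _).trans ?_
  rw [← nsmul_eq_mul]
  exact sum_le_card_nsmul _ _ _ h

lemma measureReal_or_le (P Q : Ω → Prop) :
    μ.real {ω | P ω ∨ Q ω} ≤ μ.real {ω | P ω} + μ.real {ω | Q ω} :=
  measureReal_union_le {ω | P ω} {ω | Q ω}

lemma exp_neg_plog_le {M : ℕ} (hM : 0 < M) (r : ℕ) :
    Real.exp (-(r * plog M)) ≤ ((M : ℝ)⁻¹) ^ r := by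
  have hM0 : (0 : ℝ) < M := by exact_mod_cast hM
  rw [← mul_neg, Real.exp_nat_mul]
  refine pow_le_pow_left₀ (Real.exp_pos _).le ?_ r
  rw [Real.exp_neg]
  refine inv_anti₀ hM0 ?_
  rw [← Real.log_le_iff_le_exp hM0]
  exact log_le_plog hM0

/-- The union over the grid of level at most `s + 1` costs less than the deviation bound gains. -/
lemma grid_union_le {m : Fin d → ℕ} {s s' : ℕ} (hs : s' ≤ s + 1) (M : ℕ) :
    #(grid m s') * (2 * Real.exp (-(8 * d * (s + 1) * plog M))) ≤
      2 * Real.exp (-((3 * d : ℕ) * plog M)) := by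
  have hp := one_le_plog (M : ℝ)
  have h1 : (#(grid m s') : ℝ) ≤ Real.exp (5 * d * (s + 1) * plog M) := by
    have h2 : #(grid m s') ≤ (32 ^ (s + 1)) ^ d := by
      refine (card_grid m s').trans (Nat.pow_le_pow_left ?_ d)
      calc 2 * 16 ^ s' ≤ 2 ^ (s + 1) * 16 ^ (s + 1) := Nat.mul_le_mul
            (Nat.le_self_pow (by omega) 2) (Nat.pow_le_pow_right (by norm_num) hs)
        _ = 32 ^ (s + 1) := by rw [← mul_pow]; norm_num
    have h3 : (32 : ℝ) ≤ Real.exp 5 := by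
      have : Real.exp 5 = Real.exp 1 ^ 5 := by rw [← Real.exp_nat_mul]; norm_num
      rw [this]
      have := Real.add_one_le_exp (1 : ℝ)
      calc (32 : ℝ) = (1 + 1) ^ 5 := by norm_num
        _ ≤ _ := by gcongr
    calc (#(grid m s') : ℝ) ≤ (32 ^ (s + 1)) ^ d := by exact_mod_cast h2
      _ ≤ (Real.exp 5 ^ (s + 1)) ^ d := by gcongr
      _ = Real.exp (5 * d * (s + 1) * 1) := by
        rw [← pow_mul, ← Real.exp_nat_mul]; push_cast; ring_nf
      _ ≤ _ := by gcongr
  calc #(grid m s') * (2 * Real.exp (-(8 * d * (s + 1) * plog M)))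
      ≤ Real.exp (5 * d * (s + 1) * plog M) * (2 * Real.exp (-(8 * d * (s + 1) * plog M))) := by
        gcongr
    _ = 2 * Real.exp (-(3 * d * plog M * (s + 1))) := by
        rw [mul_left_comm, ← Real.exp_add]; ring_nf
    _ ≤ _ := by
        push_cast
        have : 0 ≤ 3 * d * plog M := by positivity
        have hs0 : (0 : ℝ) ≤ s := by positivity
        refine mul_le_mul_of_nonneg_left (Real.exp_le_exp.2 ?_) (by norm_num)
        nlinarith

lemma integral_sq_le_of_abs_le {Z : Ω → ℝ} (h2 : Integrable (fun ω => Z ω ^ 2) μ)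
    {v : ℝ} (hv : ∫ ω, Z ω ^ 2 ∂μ ≤ v) {h : ℝ → ℝ} (hle : ∀ y, |h y| ≤ |y|) :
    ∫ ω, h (Z ω) ^ 2 ∂μ ≤ v := by
  refine le_trans (integral_mono_of_nonneg (ae_of_all _ fun ω => sq_nonneg _) h2
    (ae_of_all _ fun ω => ?_)) hv
  exact sq_le_sq.2 (hle _)

variable [IsProbabilityMeasure μ]

lemma abs_mean_trunc_le {Z : Ω → ℝ} (hZ : Measurable Z) (hint : Integrable Z μ)
    (hmean : ∫ ω, Z ω ∂μ = 0) (h2 : Integrable (fun ω => Z ω ^ 2) μ) {c : ℝ} (hc : 0 < c) :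
    |∫ ω, trunc c (Z ω) ∂μ| ≤ tail μ Z c / c := by
  have hti := integrable_of_abs_le (μ := μ) (trunc_mono c).measurable (abs_trunc_le hc.le) hZ
  have h := abs_integral_le_tail hZ h2 (H := fun ω => Z ω - trunc c (Z ω))
    (fun ω => abs_sub_trunc_le hc (Z ω))
  rwa [integral_sub hint hti, hmean, zero_sub, abs_neg] at h

/-- Outside an event of small probability, the truncated partial sums at all points of a block are
controlled by those at the points of the coarsest grid. -/
lemma chain_event (hd : 2 ≤ d) (hmeas : ∀ k : Fin d → ℕ, 1 ≤ k → Measurable (Y k))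
    (hNA : NegAssocOn μ Y (Set.Ici 1))
    (hid : ∀ k : Fin d → ℕ, 1 ≤ k → μ.map (Y k) = μ.map (Y 1))
    (hint : Integrable (Y 1) μ) (hmean : ∫ ω, Y 1 ω ∂μ = 0)
    (h2 : Integrable (fun ω => Y 1 ω ^ 2) μ)
    {v η : ℝ} (hη : 0 < η) (hv : ∫ ω, Y 1 ω ^ 2 ∂μ ≤ v) {S : ℕ}
    (hS : ∀ s, S ≤ s → 32 * (d : ℝ) ^ 2 * (s + 1) * v ≤ η ^ 2 * 4 ^ s)
    {m : Fin d → ℕ} {M : ℕ} (hM : lvol m = M) (hM0 : 0 < M)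
    (hl : 32 * d ≤ η * √(plog M)) (hA : 4 * d * v ≤ η * √(plog M))
    (hB : 4 * d * √(plog M) * tail μ (Y 1) (√(2 ^ M) / (4 * plog M ^ 3)) ≤ η) :
    μ.real {ω | ¬ ∀ k ≤ side m, |∑ i ∈ Icc 1 k, trunc (lev M S) (Y i ω)| ≤
      |∑ i ∈ Icc 1 (rd m S k), trunc (lev M S) (Y i ω)| + 12 * η * scl M} ≤
      6 * ((M : ℝ)⁻¹) ^ (2 * d) := by
  have hZ := hmeas 1 le_rfl
  have hmc := fun s => mean_cond hZ h2 hη hv d M s hA hB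
  -- increments of the sums with lowered truncation, along the grid
  have h1 : ∀ s ∈ Ico S (S + M), μ.real {ω | ∃ κ ∈ grid m (s + 1), 2 * (η / 2 ^ s * scl M) <
      |∑ i ∈ Icc 1 κ \ Icc 1 (rd m s κ), trunc (lev M (s + 1)) (Y i ω)|} ≤
      2 * Real.exp (-((3 * d : ℕ) * plog M)) := by
    intro s hs
    refine (measureReal_exists_le _ _ fun κ hκ => ?_).trans
      (grid_union_le (m := m) (le_refl (s + 1)) M)
    refine level_bound hd hmeas hNA hid hη (Or.inl (trunc_mono _))
      (fun y => (abs_trunc_le (lev_pos _ _).le y).trans (lev_succ_le M s))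
      (integral_sq_le_of_abs_le h2 hv (abs_trunc_le_abs (lev_pos _ _).le)) ?_ _
      (fun i hi => (mem_Icc.1 (Finset.mem_sdiff.1 hi).1).1) ?_ hl (hS s (mem_Ico.1 hs).1)
    · exact (mul_le_mul_of_nonneg_left (abs_mean_trunc_le hZ hint hmean h2 (lev_pos _ _))
        (by positivity)).trans (hmc s)
    · rw [← hM]; exact card_rd_sdiff m s (grid_le hκ)
  -- the discarded bands
  have h23 : ∀ e : ℝ, (e = 1 ∨ e = -1) → ∀ s ∈ Ico S (S + M),
      μ.real {ω | ∃ κ ∈ grid m s, 2 * (η / 2 ^ s * scl M) <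
        |∑ i ∈ Icc 1 (up m s κ) \ Icc 1 κ, band (lev M s) (lev M (s + 1)) (e * Y i ω)|} ≤
      2 * Real.exp (-((3 * d : ℕ) * plog M)) := by
    intro e he s hs
    have hea : ∀ y, |e * y| = |y| := by rcases he with rfl | rfl <;> simp
    refine (measureReal_exists_le _ _ fun κ hκ => ?_).trans
      (grid_union_le (m := m) (Nat.le_succ s) M)
    refine level_bound (h := fun y => band (lev M s) (lev M (s + 1)) (e * y))
      hd hmeas hNA hid hη ?_ (fun y => ?_)
      (integral_sq_le_of_abs_le (h := fun y => band (lev M s) (lev M (s + 1)) (e * y)) h2 hv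
        fun y => ?_) ?_ _
      (fun i hi => (mem_Icc.1 (Finset.mem_sdiff.1 hi).1).1) ?_ hl (hS s (mem_Ico.1 hs).1)
    · rcases he with rfl | rfl
      · exact Or.inl fun a b h => band_mono _ _ (by linarith)
      · exact Or.inr fun a b h => band_mono _ _ (by linarith)
    · rw [abs_of_nonneg (band_nonneg _ _ _)]
      exact band_le (lev_pos _ _).le (lev_pos _ _).le _
    · rw [abs_of_nonneg (band_nonneg _ _ _), ← hea y]
      exact band_le_abs (lev_pos _ _).le _
    · refine (mul_le_mul_of_nonneg_left (abs_integral_le_tail hZ h2 fun ω => ?_)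
        (by positivity)).trans (hmc s)
      have := band_le_sq (c := lev M s) (lev_pos M (s + 1)) (e * Y 1 ω)
      rw [hea] at this
      rw [abs_of_nonneg (band_nonneg _ _ _)]
      refine this.trans (le_of_eq ?_)
      rw [← sq_abs (e * _), hea, sq_abs]
    · rw [← hM]; exact card_up_sdiff m s κ
  have hIco : #(Ico S (S + M)) = M := by simp
  have hbound : (M : ℝ) * (2 * Real.exp (-((3 * d : ℕ) * plog M))) ≤
      2 * ((M : ℝ)⁻¹) ^ (2 * d) := by
    have hM1 : (1 : ℝ) ≤ M := by exact_mod_cast hM0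
    have hi0 : 0 ≤ (M : ℝ)⁻¹ := by positivity
    have hi1 : (M : ℝ)⁻¹ ≤ 1 := inv_le_one_of_one_le₀ hM1
    have e1 := exp_neg_plog_le hM0 (3 * d)
    calc (M : ℝ) * (2 * Real.exp (-((3 * d : ℕ) * plog M)))
        ≤ M * (2 * ((M : ℝ)⁻¹) ^ (3 * d)) := by gcongr
      _ ≤ M * (2 * ((M : ℝ)⁻¹) ^ (2 * d + 1)) := by
          gcongr M * (2 * ?_)
          exact pow_le_pow_of_le_one hi0 hi1 (by omega)
      _ = _ := by rw [pow_succ]; field_simp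
  have u1 := (measureReal_exists_le _ _ h1).trans
    (by rw [hIco]; exact hbound : _ ≤ 2 * ((M : ℝ)⁻¹) ^ (2 * d))
  have u2 := (measureReal_exists_le _ _ (h23 1 (Or.inl rfl))).trans
    (by rw [hIco]; exact hbound : _ ≤ 2 * ((M : ℝ)⁻¹) ^ (2 * d))
  have u3 := (measureReal_exists_le _ _ (h23 (-1) (Or.inr rfl))).trans
    (by rw [hIco]; exact hbound : _ ≤ 2 * ((M : ℝ)⁻¹) ^ (2 * d))
  refine le_trans (measureReal_mono (s₂ := {ω | _ ∨ _ ∨ _}) ?_)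
    ((measureReal_or_le _ _).trans
      ((add_le_add u1 ((measureReal_or_le _ _).trans (add_le_add u2 u3))).trans
        (le_of_eq (by ring))))
  intro ω hω
  simp only [Set.mem_ofPred_eq] at hω ⊢
  by_contra hcon
  push Not at hcon
  obtain ⟨c1, c2, c3⟩ := hcon
  apply hω
  intro k hk
  have hch := chaining m (fun s i => trunc (lev M s) (Y i ω)) (fun s => 2 * (η / 2 ^ s * scl M))
    (fun s => 4 * (η / 2 ^ s * scl M)) S (by rw [hM]; exact c1) ?_ hk
  · refine hch.trans ?_
    gcongr
    rw [hM]
    have hg : ∑ s ∈ Ico S (S + M), ((1 : ℝ) / 2) ^ s ≤ 2 :=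
      (sum_le_sum_of_subset_of_nonneg (fun s hs => mem_range.2 (mem_Ico.1 hs).2)
        (fun _ _ _ => by positivity)).trans (sum_geometric_two_le _)
    calc ∑ s ∈ Ico S (S + M), (2 * (η / 2 ^ s * scl M) + 4 * (η / 2 ^ s * scl M))
        = (6 * η * scl M) * ∑ s ∈ Ico S (S + M), ((1 : ℝ) / 2) ^ s := by
          rw [mul_sum]
          refine sum_congr rfl fun s _ => ?_
          rw [one_div, inv_pow]
          ring
      _ ≤ (6 * η * scl M) * 2 := by
          have := scl_pos M
          gcongr
      _ = _ := by ring
  · intro s hs κ hκ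
    rw [hM] at hs
    calc _ ≤ ∑ i ∈ Icc 1 (up m s κ) \ Icc 1 κ, (band (lev M s) (lev M (s + 1)) (1 * Y i ω) +
            band (lev M s) (lev M (s + 1)) (-1 * Y i ω)) := by
          refine sum_le_sum fun i _ => ?_
          rw [one_mul, neg_one_mul]
          exact abs_trunc_sub_trunc (lev_pos _ _).le (lev_succ_le _ _) _
      _ ≤ 2 * (η / 2 ^ s * scl M) + 2 * (η / 2 ^ s * scl M) := by
          rw [sum_add_distrib]
          exact add_le_add ((le_abs_self _).trans (c2 s hs κ hκ))
            ((le_abs_self _).trans (c3 s hs κ hκ))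
      _ = _ := by ring

lemma card_Icc_one (κ : Fin d → ℕ) : #(Icc 1 κ) = ∏ j, κ j := by
  rw [Pi.card_Icc]
  simp

/-- Deviation of the truncated sums at the points of the coarsest grid; this is where the constant
of the law of the iterated logarithm comes from. -/
lemma main_event (hd : 2 ≤ d) (hmeas : ∀ k : Fin d → ℕ, 1 ≤ k → Measurable (Y k))
    (hNA : NegAssocOn μ Y (Set.Ici 1))
    (hid : ∀ k : Fin d → ℕ, 1 ≤ k → μ.map (Y k) = μ.map (Y 1))
    (hint : Integrable (Y 1) μ) (hmean : ∫ ω, Y 1 ω ∂μ = 0)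
    (h2 : Integrable (fun ω => Y 1 ω ^ 2) μ)
    {v η : ℝ} (hη : 0 < η) (hv0 : 0 < v) (hv : ∫ ω, Y 1 ω ^ 2 ∂μ ≤ v) {S : ℕ}
    {m : Fin d → ℕ} {M : ℕ} (hM : lvol m = M) (hM0 : 0 < M) (hmS : ∀ j, 4 * S ≤ m j + 1)
    (hl : 18 * d * (16 ^ S) ^ d ≤ v * plog M)
    (hB : √(plog M) * 4 ^ S * tail μ (Y 1) (lev M S) ≤ η) :
    μ.real {ω | ∃ κ ∈ grid m S, 3 * √(2 * d * v * (∏ j, (κ j : ℝ)) * plog M) + η * scl M <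
      |∑ i ∈ Icc 1 κ, trunc (lev M S) (Y i ω)|} ≤
      2 * (2 * 16 ^ S) ^ d * ((M : ℝ)⁻¹) ^ (2 * d) := by
  have hZ := hmeas 1 le_rfl
  have hp := plog_pos (M : ℝ)
  have hd0 : (0 : ℝ) < d := by exact_mod_cast (by omega : 0 < d)
  set l := plog (M : ℝ) with hldef
  have key : ∀ κ ∈ grid m S, μ.real {ω | 3 * √(2 * d * v * (∏ j, (κ j : ℝ)) * l) + η * scl M <
      |∑ i ∈ Icc 1 κ, trunc (lev M S) (Y i ω)|} ≤ 2 * ((M : ℝ)⁻¹) ^ (2 * d) := by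
    intro κ hκ
    by_cases h1 : (1 : Fin d → ℕ) ≤ κ
    swap
    · have : {ω | 3 * √(2 * d * v * (∏ j, (κ j : ℝ)) * l) + η * scl M <
          |∑ i ∈ Icc 1 κ, trunc (lev M S) (Y i ω)|} = ∅ := by
        rw [Icc_eq_empty h1]
        ext ω
        have := scl_pos M
        simp only [sum_empty, abs_zero, Set.mem_ofPred_eq, Set.mem_empty_iff_false, iff_false,
          not_lt]
        positivity
      rw [this]
      simp only [measureReal_empty]
      positivity
    set a : ℝ := ∏ j, (κ j : ℝ) with ha
    have hcard : (#(Icc 1 κ) : ℝ) = a := by rw [card_Icc_one]; push_cast; rfl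
    have ha0 : 0 < a := prod_pos fun j _ => by exact_mod_cast h1 j
    have haM : a ≤ 2 ^ M := by
      have := prod_le_prod' (s := univ) fun j _ => grid_le hκ j
      rw [prod_side, hM] at this
      rw [ha]
      exact_mod_cast this
    -- a grid point without zero coordinates spans at least a fraction `16 ^ (-S * d)` of the block,
    -- so that the truncation level is small against `√a`
    have haL : (2 : ℝ) ^ M ≤ a * (16 ^ S) ^ d := by
      obtain ⟨k, hk, hkκ⟩ := mem_image.1 hκ
      have hj : ∀ j, side m j ≤ κ j * 16 ^ S := by
        intro j
        have hκj : 0 < κ j := h1 j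
        rw [← hkκ] at hκj ⊢
        simp only [rd] at hκj ⊢
        have hq : 0 < k j / mesh m S j := Nat.pos_of_mul_pos_right hκj
        have h16 : (16 : ℕ) ^ S = 2 ^ (4 * S) := by rw [pow_mul]; norm_num
        calc side m j = mesh m S j * 16 ^ S := by
              rw [side, mesh, h16, ← pow_add, Nat.sub_add_cancel (hmS j)]
          _ ≤ _ := Nat.mul_le_mul_right _ (Nat.le_mul_of_pos_left _ hq)
      have := prod_le_prod' (s := univ) fun j _ => hj j
      rw [prod_side, hM, prod_mul_distrib, prod_const, card_univ, Fintype.card_fin] at this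
      rw [ha]
      exact_mod_cast this
    -- `lam = 3 / 2 * w` is optimal for a deviation of `3 * (a * v * w)` with variance bound `a * v`
    set w := √(2 * d * l / (a * v)) with hw
    have hw2 : w ^ 2 = 2 * d * l / (a * v) := Real.sq_sqrt (by positivity)
    have hw0 : 0 ≤ w := Real.sqrt_nonneg _
    have hy : √(2 * d * v * a * l) = a * v * w := by
      rw [Real.sqrt_eq_iff_mul_self_eq (by positivity) (by positivity)]
      calc 2 * d * v * a * l = (a * v) ^ 2 * w ^ 2 := by rw [hw2]; field_simp
        _ = _ := by ring
    have hlc : 2 * (3 / 2 * w) * lev M S ≤ 1 := by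
      have hsq : (3 * w * lev M S) ^ 2 ≤ 1 := by
        rw [mul_pow, mul_pow, hw2, lev, div_pow, Real.sq_sqrt (by positivity), ← hldef]
        have e : (3 : ℝ) ^ 2 * (2 * d * l / (a * v)) * (2 ^ M / (l * 4 ^ S) ^ 2) =
            18 * d * 2 ^ M / (a * (v * l) * (4 ^ S) ^ 2) := by
          field_simp
          ring
        rw [e, div_le_one (by positivity)]
        have h4 : (1 : ℝ) ≤ (4 ^ S) ^ 2 := one_le_pow₀ (one_le_pow₀ (by norm_num))
        calc 18 * d * (2 : ℝ) ^ M ≤ 18 * d * (a * (16 ^ S) ^ d) := by gcongr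
          _ = a * (18 * d * (16 ^ S) ^ d) := by ring
          _ ≤ a * (v * l) := by gcongr
          _ ≤ _ := le_mul_of_one_le_right (by positivity) h4
      calc _ = 3 * w * lev M S := by ring
        _ ≤ 1 := (le_abs_self _).trans
          (abs_le_one_iff_mul_self_le_one.2 (by rw [← sq]; exact hsq))
    have ht : a * |∫ ω, trunc (lev M S) (Y 1 ω) ∂μ| ≤ η * scl M := by
      have hr : √((2 : ℝ) ^ M) * √(2 ^ M) = 2 ^ M := Real.mul_self_sqrt (by positivity)
      have hr0 : 0 < √((2 : ℝ) ^ M) := by positivity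
      have hls : √l * √l = l := Real.mul_self_sqrt hp.le
      calc a * |∫ ω, trunc (lev M S) (Y 1 ω) ∂μ|
          ≤ 2 ^ M * (tail μ (Y 1) (lev M S) / lev M S) :=
            mul_le_mul haM (abs_mean_trunc_le hZ hint hmean h2 (lev_pos _ _)) (abs_nonneg _)
              (by positivity)
        _ = (√l * 4 ^ S * tail μ (Y 1) (lev M S)) * (√(2 ^ M) * √l) := by
            generalize tail μ (Y 1) (lev M S) = T
            rw [lev, ← hldef]
            generalize √((2 : ℝ) ^ M) = r at hr hr0
            rw [← hr]
            field_simp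
            rw [Real.sq_sqrt hp.le]
        _ ≤ η * (√(2 ^ M) * √l) := by gcongr
        _ = _ := by rw [scl_eq]
    have hb := bernstein_two hmeas hNA hid (Or.inl (trunc_mono (lev M S)))
      (abs_trunc_le (lev_pos M S).le)
      (integral_sq_le_of_abs_le h2 hv (abs_trunc_le_abs (lev_pos _ _).le)) (Icc 1 κ)
      (fun i hi => (mem_Icc.1 hi).1) hcard.le (lam := 3 / 2 * w) (by positivity) hlc
      (3 * (a * v * w)) ht
    rw [hy]
    refine hb.trans ?_
    gcongr
    refine le_trans (Real.exp_le_exp.2 ?_) (exp_neg_plog_le hM0 (2 * d))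
    have e : -(3 / 2 * w) * (3 * (a * v * w)) + (3 / 2 * w) ^ 2 * a * v =
        -(9 / 4) * (a * v * w ^ 2) := by ring
    have e2 : a * v * w ^ 2 = 2 * d * l := by rw [hw2]; field_simp
    rw [e, e2, ← hldef]
    push_cast
    have : 0 < d * l := by positivity
    nlinarith
  refine (measureReal_exists_le _ _ key).trans ?_
  have hc : (#(grid m S) : ℝ) ≤ (2 * 16 ^ S) ^ d := by exact_mod_cast card_grid m S
  calc _ ≤ (2 * 16 ^ S : ℝ) ^ d * (2 * ((M : ℝ)⁻¹) ^ (2 * d)) := by gcongr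
    _ = _ := by ring

end Block

section Excess

variable {Ω : Type} [MeasurableSpace Ω] {μ : Measure Ω} {d : ℕ} {Y : (Fin d → ℕ) → Ω → ℝ}

lemma large_event (hmeas : ∀ k : Fin d → ℕ, 1 ≤ k → Measurable (Y k))
    (hid : ∀ k : Fin d → ℕ, 1 ≤ k → μ.map (Y k) = μ.map (Y 1)) (m : Fin d → ℕ) (r : ℝ) :
    μ.real {ω | ∃ i ∈ Icc 1 (side m), r < |Y i ω|} ≤ 2 ^ lvol m * μ.real {ω | r < |Y 1 ω|} := by
  have hc : #(Icc 1 (side m)) = 2 ^ lvol m := by rw [card_Icc_one, prod_side]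
  have := measureReal_exists_le (μ := μ) (Icc 1 (side m)) (fun i ω => r < |Y i ω|)
    (b := μ.real {ω | r < |Y 1 ω|}) fun i hi => ?_
  · rw [hc] at this
    exact_mod_cast this
  · have h1 := (mem_Icc.1 hi).1
    have hs : MeasurableSet {y : ℝ | r < |y|} :=
      measurableSet_lt measurable_const measurable_id.abs
    refine le_of_eq (congrArg ENNReal.toReal ?_)
    have e := congrArg (fun ν => ν {y : ℝ | r < |y|}) (hid i h1)
    rwa [Measure.map_apply (hmeas i h1) hs, Measure.map_apply (hmeas 1 le_rfl) hs] at e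

variable [IsProbabilityMeasure μ]

/-- Outside a small event the parts beyond the coarsest truncation level are negligible: few
variables exceed that level, and none of them exceeds a small multiple of `scl M`. -/
lemma excess_event (hmeas : ∀ k : Fin d → ℕ, 1 ≤ k → Measurable (Y k))
    (hNA : NegAssocOn μ Y (Set.Ici 1))
    (hid : ∀ k : Fin d → ℕ, 1 ≤ k → μ.map (Y k) = μ.map (Y 1))
    (hd : 2 ≤ d) (h2 : Integrable (fun ω => Y 1 ω ^ 2) μ)
    {η : ℝ} (hη : 0 < η) {S : ℕ} {m : Fin d → ℕ} {M : ℕ} (hM : lvol m = M) (hM0 : 0 < M)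
    (hB : 16 ^ S * plog M ^ 2 * tail μ (Y 1) (lev M S) * √√M ≤ 1) :
    μ.real {ω | ¬ ∀ k ≤ side m, ∑ i ∈ Icc 1 k, |Y i ω - trunc (lev M S) (Y i ω)| ≤ η * scl M} ≤
      2 * Real.exp 1 * ((M : ℝ)⁻¹) ^ (2 * d) +
        2 ^ M * μ.real {ω | η / (2 * (12 * d : ℕ)) * scl M < |Y 1 ω|} := by
  have hZ := hmeas 1 le_rfl
  have hd0 : (0 : ℝ) < d := by exact_mod_cast (by omega : 0 < d)
  have hc0 := lev_pos M S
  have hM1 : (1 : ℝ) ≤ M := by exact_mod_cast hM0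
  set c := lev M S with hc
  have hcard : (#(Icc 1 (side m)) : ℝ) = 2 ^ M := by
    rw [card_Icc_one, prod_side, hM]; push_cast; rfl
  have hcount : ∀ h : ℝ → ℝ, (Monotone h ∨ Antitone h) → (∀ y, h y = 0 ∨ h y = 1) →
      (∀ y, h y ≤ if c < |y| then 1 else 0) →
      μ.real {ω | ((12 * d : ℕ) : ℝ) ≤ ∑ i ∈ Icc 1 (side m), h (Y i ω)} ≤
        Real.exp 1 * ((M : ℝ)⁻¹) ^ (2 * d) := by
    intro h hh h01 hle
    -- the expected number of exceedances is at most `M ^ (-1/4)`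
    have hu : 1 ≤ √√(M : ℝ) := Real.one_le_sqrt.2 (Real.one_le_sqrt.2 hM1)
    have hp : #(Icc 1 (side m)) * (∫ ω, h (Y 1 ω) ∂μ) * √√M ≤ 1 := by
      rw [hcard]
      have hi := integral_ind_le_tail hZ h2 hc0
        (H := fun ω => h (Y 1 ω)) ((measurable_of_monotone_or_antitone hh).comp hZ)
        (fun ω => by rcases h01 (Y 1 ω) with e | e <;> simp [e]) (fun ω => hle _)
      refine le_trans ?_ hB
      have hpl := plog_pos (M : ℝ)
      calc 2 ^ M * (∫ ω, h (Y 1 ω) ∂μ) * √√M ≤ 2 ^ M * (tail μ (Y 1) c / c ^ 2) * √√M := by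
            gcongr
        _ = _ := by
            generalize tail μ (Y 1) c = T
            have h16 : (16 : ℝ) ^ S = 4 ^ S * 4 ^ S := by rw [← mul_pow]; norm_num
            rw [hc, lev, div_pow, Real.sq_sqrt (by positivity), h16]
            field_simp
    refine (count_le hmeas hNA hid hh h01 _ (fun i hi => (mem_Icc.1 hi).1) hu hp _).trans ?_
    refine mul_le_mul_of_nonneg_left ?_ (Real.exp_pos _).le
    have e4 : √√(M : ℝ) ^ 4 = M := by
      rw [show 4 = 2 * 2 from rfl, pow_mul, Real.sq_sqrt (Real.sqrt_nonneg _),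
        Real.sq_sqrt (by linarith)]
    rw [show 12 * d = 4 * (3 * d) by ring, pow_mul, inv_pow, e4]
    exact pow_le_pow_of_le_one (by positivity) (inv_le_one_of_one_le₀ hM1) (by omega)
  have u1 := hcount (fun y => if c < y then 1 else 0)
    (Or.inl fun a b h => by dsimp only; split_ifs <;> linarith)
    (fun y => by split_ifs <;> simp)
    (fun y => by
      have := le_abs_self y
      split_ifs <;> linarith)
  have u2 := hcount (fun y => if y < -c then 1 else 0)
    (Or.inr fun a b h => by dsimp only; split_ifs <;> linarith)
    (fun y => by split_ifs <;> simp)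
    (fun y => by
      have := neg_abs_le y
      split_ifs <;> linarith)
  have u3 := large_event hmeas hid m (η / (2 * (12 * d : ℕ)) * scl M)
  rw [hM] at u3
  refine le_trans (measureReal_mono (s₂ := {ω | _ ∨ _ ∨ _}) ?_)
    ((measureReal_or_le _ _).trans
      ((add_le_add u1 ((measureReal_or_le _ _).trans (add_le_add u2 u3))).trans
        (le_of_eq (by ring))))
  intro ω hω
  simp only [Set.mem_ofPred_eq] at hω ⊢
  by_contra hcon
  push Not at hcon
  obtain ⟨c1, c2, c3⟩ := hcon
  apply hω
  intro k hk
  set r := η / (2 * (12 * d : ℕ)) * scl M with hr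
  have hr0 : 0 ≤ r := by
    have := scl_pos M
    positivity
  calc ∑ i ∈ Icc 1 k, |Y i ω - trunc c (Y i ω)|
      ≤ ∑ i ∈ Icc 1 (side m), |Y i ω - trunc c (Y i ω)| :=
        sum_le_sum_of_subset_of_nonneg (Icc_subset_Icc_right hk) fun _ _ _ => abs_nonneg _
    _ ≤ ∑ i ∈ Icc 1 (side m),
          r * ((if c < Y i ω then 1 else 0) + if Y i ω < -c then 1 else 0) := by
        refine sum_le_sum fun i hi => (sub_trunc_abs_le hc0 _).trans ?_
        refine mul_le_mul_of_nonneg_right (c3 i hi) ?_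
        split_ifs <;> norm_num
    _ ≤ r * ((12 * d : ℕ) + (12 * d : ℕ)) := by
        rw [← mul_sum, sum_add_distrib]
        exact mul_le_mul_of_nonneg_left (add_le_add c1.le c2.le) hr0
    _ = η * scl M := by
        rw [hr]
        push_cast
        field_simp
        ring

/-- Deviation bound for all partial sums in a block. -/
lemma block_event (hd : 2 ≤ d) (hmeas : ∀ k : Fin d → ℕ, 1 ≤ k → Measurable (Y k))
    (hNA : NegAssocOn μ Y (Set.Ici 1))
    (hid : ∀ k : Fin d → ℕ, 1 ≤ k → μ.map (Y k) = μ.map (Y 1))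
    (hint : Integrable (Y 1) μ) (hmean : ∫ ω, Y 1 ω ∂μ = 0)
    (h2 : Integrable (fun ω => Y 1 ω ^ 2) μ)
    (h3 : Integrable (fun ω => Y 1 ω ^ 2 * √(plog |Y 1 ω|)) μ)
    {v η : ℝ} (hη : 0 < η) (hv0 : 0 < v) (hv : ∫ ω, Y 1 ω ^ 2 ∂μ ≤ v) :
    ∃ (D ε : ℝ) (S : ℕ), 0 ≤ D ∧ 0 < ε ∧ ∀ᶠ M : ℕ in atTop, ∀ m : Fin d → ℕ, lvol m = M →
      (∀ j, S ≤ m j) →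
      μ.real {ω | ¬ ∀ k ≤ side m, |∑ i ∈ Icc 1 k, Y i ω| ≤
        3 * √(2 * d * v * (∏ j, (k j : ℝ)) * plog M) + 14 * η * scl M} ≤
        D * ((M : ℝ)⁻¹) ^ (2 * d) + 2 ^ M * μ.real {ω | ε * scl M < |Y 1 ω|} := by
  have hZ := hmeas 1 le_rfl
  have hd0 : (0 : ℝ) < d := by exact_mod_cast (by omega : 0 < d)
  obtain ⟨S, hS⟩ : ∃ S : ℕ, ∀ s, S ≤ s → 32 * (d : ℝ) ^ 2 * (s + 1) * v ≤ η ^ 2 * 4 ^ s := by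
    obtain ⟨S, hS⟩ := exists_nat_ge (32 * (d : ℝ) ^ 2 * v / η ^ 2)
    refine ⟨S, fun s hs => ?_⟩
    have h1 : 32 * (d : ℝ) ^ 2 * v ≤ η ^ 2 * 2 ^ s := by
      rw [div_le_iff₀ (by positivity), mul_comm (S : ℝ)] at hS
      refine hS.trans ?_
      gcongr
      exact_mod_cast hs.trans Nat.lt_two_pow_self.le
    have hs2 : ((s : ℝ) + 1) ≤ 2 ^ s := by exact_mod_cast Nat.lt_two_pow_self (n := s)
    calc 32 * (d : ℝ) ^ 2 * (s + 1) * v = (32 * (d : ℝ) ^ 2 * v) * (s + 1) := by ring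
      _ ≤ (η ^ 2 * 2 ^ s) * 2 ^ s := by gcongr
      _ = η ^ 2 * 4 ^ s := by
        rw [mul_assoc, ← mul_pow]; norm_num
  refine ⟨6 + 2 * (2 * 16 ^ S) ^ d + 2 * Real.exp 1, η / (2 * (12 * d : ℕ)), 4 * S,
    by positivity, by positivity, ?_⟩
  have hsq : Tendsto (fun M : ℕ => η * √(plog M)) atTop atTop :=
    ((Real.tendsto_sqrt_atTop).comp tendsto_plog_natCast).const_mul_atTop hη
  filter_upwards [hsq.eventually_ge_atTop (32 * d), hsq.eventually_ge_atTop (4 * d * v),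
    (tendsto_plog_natCast.const_mul_atTop hv0).eventually_ge_atTop (18 * d * (16 ^ S) ^ d),
    tail_asymp hZ h2 h3 (A := 4 * d / η) (C := 4) (by positivity) (by norm_num),
    tail_asymp hZ h2 h3 (A := 4 ^ S / η) (C := 4 ^ S) (by positivity) (by positivity),
    tail_asymp hZ h2 h3 (A := 16 ^ S) (C := 4 ^ S) (by positivity) (by positivity),
    eventually_gt_atTop 0] with M e1 e2 e3 e4 e5 e6 hM0 m hM hmS
  have hp1 := one_le_plog (M : ℝ)
  have hM1 : (1 : ℝ) ≤ M := by exact_mod_cast hM0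
  have hu : 1 ≤ √√(M : ℝ) := Real.one_le_sqrt.2 (Real.one_le_sqrt.2 hM1)
  have hsqp : √(plog (M : ℝ)) ≤ plog M ^ 2 := by
    have h1 : √(plog (M : ℝ)) ≤ plog M := by
      rw [Real.sqrt_le_left (by linarith)]
      nlinarith
    nlinarith
  have hlev : √(2 ^ M) / (4 ^ S * plog M ^ 3) ≤ lev M S := by
    unfold lev
    rw [mul_comm]
    refine div_le_div_of_nonneg_left (by positivity) (by positivity) ?_
    gcongr
    exact le_self_pow₀ hp1 (by norm_num)
  have htl := tail_anti hZ h2 hlev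
  have hB1 : 4 * d * √(plog M) * tail μ (Y 1) (√(2 ^ M) / (4 * plog M ^ 3)) ≤ η := by
    have ht := tail_nonneg (μ := μ) (Z := Y 1) (√(2 ^ M) / (4 * plog M ^ 3))
    rw [← div_le_one hη]
    refine le_trans ?_ e4
    calc _ = 4 * d / η * √(plog M) * tail μ (Y 1) (√(2 ^ M) / (4 * plog M ^ 3)) * 1 := by ring
      _ ≤ _ := by gcongr
  have hB2 : √(plog M) * 4 ^ S * tail μ (Y 1) (lev M S) ≤ η := by
    have ht := tail_nonneg (μ := μ) (Z := Y 1) (lev M S)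
    have ht' := ht.trans htl
    rw [← div_le_one hη]
    refine le_trans ?_ e5
    calc _ = 4 ^ S / η * √(plog M) * tail μ (Y 1) (lev M S) * 1 := by ring
      _ ≤ _ := by gcongr
  have hB3 : 16 ^ S * plog M ^ 2 * tail μ (Y 1) (lev M S) * √√M ≤ 1 := by
    refine le_trans ?_ e6
    gcongr
  have u1 := chain_event hd hmeas hNA hid hint hmean h2 hη hv hS hM hM0 e1 e2 hB1
  have u2 := main_event hd hmeas hNA hid hint hmean h2 hη hv0 hv hM hM0
    (fun j => (hmS j).trans (Nat.le_succ _)) e3 hB2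
  have u3 := excess_event hmeas hNA hid hd h2 hη hM hM0 hB3
  refine le_trans (measureReal_mono (s₂ := {ω | _ ∨ _ ∨ _}) ?_)
    ((measureReal_or_le _ _).trans
      ((add_le_add u1 ((measureReal_or_le _ _).trans (add_le_add u2 u3))).trans
        (le_of_eq (by ring))))
  intro ω hω
  simp only [Set.mem_ofPred_eq] at hω ⊢
  by_contra hcon
  push Not at hcon
  obtain ⟨c1, c2, c3⟩ := hcon
  apply hω
  intro k hk
  have a1 := c1 k hk
  have a2 := c2 _ (mem_grid hk)
  have a3 := c3 k hk
  have a4 : √(2 * d * v * (∏ j, (rd m S k j : ℝ)) * plog M) ≤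
      √(2 * d * v * (∏ j, (k j : ℝ)) * plog M) := by
    refine Real.sqrt_le_sqrt ?_
    gcongr with j
    exact rd_le m S k j
  have a5 : |∑ i ∈ Icc 1 k, Y i ω| ≤ |∑ i ∈ Icc 1 k, trunc (lev M S) (Y i ω)| +
      ∑ i ∈ Icc 1 k, |Y i ω - trunc (lev M S) (Y i ω)| := by
    have : ∑ i ∈ Icc 1 k, Y i ω = ∑ i ∈ Icc 1 k, trunc (lev M S) (Y i ω) +
        ∑ i ∈ Icc 1 k, (Y i ω - trunc (lev M S) (Y i ω)) := by
      rw [← sum_add_distrib]; simp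
    rw [this]
    refine (abs_add_le _ _).trans ?_
    gcongr
    exact abs_sum_le_sum_abs _ _
  linarith

end Excess

/-! ### Summation over the blocks -/

section Summation

variable {d : ℕ}

lemma le_lvol (m : Fin d → ℕ) (j : Fin d) : m j + 1 ≤ lvol m :=
  single_le_sum (f := fun j => m j + 1) (fun _ _ => Nat.zero_le _) (mem_univ j)

/-- All but one coordinate determine a block of given volume. -/
lemma card_lvol_eq (hd : 2 ≤ d) (F : Finset (Fin d → ℕ)) (M : ℕ) :
    #{m ∈ F | lvol m = M} ≤ M ^ (d - 1) := by
  obtain ⟨e, rfl⟩ : ∃ e, d = e + 1 := ⟨d - 1, by omega⟩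
  have hc : #(Fintype.piFinset fun _ : Fin e => range M) = M ^ (e + 1 - 1) := by simp
  rw [← hc]
  refine card_le_card_of_injOn (fun m i => m i.succ) ?_ ?_
  · intro m hm
    have hm := (mem_filter.1 hm).2
    refine Fintype.mem_piFinset.2 fun i => mem_range.2 ?_
    have := le_lvol m i.succ
    dsimp only
    omega
  · intro m hm m' hm' h
    have hm := (mem_filter.1 hm).2
    have hm' := (mem_filter.1 hm').2
    rw [lvol, Fin.sum_univ_succ] at hm hm'
    have hs : ∀ i : Fin e, m i.succ = m' i.succ := fun i => congrFun h i
    simp only [hs] at hm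
    funext j
    refine Fin.cases ?_ hs j
    omega

variable {Ω : Type} [MeasurableSpace Ω] {μ : Measure Ω} [IsProbabilityMeasure μ] {Z : Ω → ℝ}

lemma sum_tail_prob_le (hd : 2 ≤ d) (hZ : Measurable Z)
    (hmom : Integrable (fun ω => (Z ω) ^ 2 * (plog |Z ω|) ^ (d - 1) / plog (plog |Z ω|)) μ)
    {ε : ℝ} (hε : 0 < ε) : ∃ K : ℝ, ∀ F : Finset ℕ, (∀ M ∈ F, 1 ≤ M) →
      ∑ M ∈ F, (M : ℝ) ^ (d - 1) * (2 ^ M * μ.real {ω | ε * scl M < |Z ω|}) ≤ K := by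
  obtain ⟨C, hC, hw⟩ := sum_weights_le hd hε
  refine ⟨C * ∫ ω, (Z ω) ^ 2 * (plog |Z ω|) ^ (d - 1) / plog (plog |Z ω|) ∂μ, fun F hF => ?_⟩
  have hms : ∀ M : ℕ, MeasurableSet {ω | ε * scl M < |Z ω|} := fun M =>
    measurableSet_lt measurable_const hZ.abs
  have hind : ∀ M : ℕ, Integrable ({ω | ε * scl M < |Z ω|}.indicator fun _ =>
      (M : ℝ) ^ (d - 1) * 2 ^ M) μ := fun M => (integrable_const _).indicator (hms M)
  calc ∑ M ∈ F, (M : ℝ) ^ (d - 1) * (2 ^ M * μ.real {ω | ε * scl M < |Z ω|})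
      = ∫ ω, ∑ M ∈ F, {ω | ε * scl M < |Z ω|}.indicator (fun _ => (M : ℝ) ^ (d - 1) * 2 ^ M) ω
          ∂μ := by
        rw [integral_finsetSum _ fun M _ => hind M]
        refine sum_congr rfl fun M _ => ?_
        rw [integral_indicator_const _ (hms M), smul_eq_mul]
        ring
    _ ≤ ∫ ω, C * ((Z ω) ^ 2 * (plog |Z ω|) ^ (d - 1) / plog (plog |Z ω|)) ∂μ := by
        refine integral_mono (integrable_finsetSum _ fun M _ => hind M) (hmom.const_mul C)
          fun ω => ?_
        have := hw (Z ω) {M ∈ F | ε * scl M < |Z ω|} fun M hM =>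
          ⟨hF M (mem_filter.1 hM).1, (mem_filter.1 hM).2⟩
        rw [sum_filter] at this
        simpa only [Set.indicator_apply, Set.mem_ofPred_eq] using this
    _ = _ := integral_const_mul _ _

lemma summable_block_prob (hd : 2 ≤ d) (hZ : Measurable Z)
    (hmom : Integrable (fun ω => (Z ω) ^ 2 * (plog |Z ω|) ^ (d - 1) / plog (plog |Z ω|)) μ)
    {D ε : ℝ} (hD : 0 ≤ D) (hε : 0 < ε) :
    Summable fun m : Fin d → ℕ => D * ((lvol m : ℝ)⁻¹) ^ (2 * d) +
      2 ^ lvol m * μ.real {ω | ε * scl (lvol m) < |Z ω|} := by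
  obtain ⟨K, hK⟩ := sum_tail_prob_le hd hZ hmom hε
  have hsum : Summable fun n : ℕ => 1 / (n : ℝ) ^ 2 := Real.summable_one_div_nat_pow.2 one_lt_two
  refine summable_of_sum_le (c := D * ∑' n : ℕ, 1 / (n : ℝ) ^ 2 + K)
    (fun m => by positivity) fun F => ?_
  rw [sum_comp (fun M : ℕ => D * ((M : ℝ)⁻¹) ^ (2 * d) +
      2 ^ M * μ.real {ω | ε * scl M < |Z ω|}) lvol]
  have hF : ∀ M ∈ F.image lvol, 1 ≤ M := by
    intro M hM
    obtain ⟨m, -, rfl⟩ := mem_image.1 hM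
    have := le_lvol m ⟨0, by omega⟩
    omega
  calc _ ≤ ∑ M ∈ F.image lvol, (D * (1 / (M : ℝ) ^ 2) +
          (M : ℝ) ^ (d - 1) * (2 ^ M * μ.real {ω | ε * scl M < |Z ω|})) := by
        refine sum_le_sum fun M hM => ?_
        have hM1 : (1 : ℝ) ≤ M := by exact_mod_cast hF M hM
        have hc : (#{m ∈ F | lvol m = M} : ℝ) ≤ (M : ℝ) ^ (d - 1) := by
          exact_mod_cast card_lvol_eq hd F M
        have hpow : (M : ℝ) ^ (d - 1) * ((M : ℝ)⁻¹) ^ (2 * d) ≤ 1 / (M : ℝ) ^ 2 := by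
          rw [show 2 * d = (d - 1) + (d + 1) by omega, pow_add, ← mul_assoc, ← mul_pow,
            mul_inv_cancel₀ (by positivity), one_pow, one_mul, one_div, ← inv_pow]
          exact pow_le_pow_of_le_one (by positivity) (inv_le_one_of_one_le₀ hM1) (by omega)
        rw [nsmul_eq_mul]
        calc _ ≤ (M : ℝ) ^ (d - 1) * (D * ((M : ℝ)⁻¹) ^ (2 * d) +
              2 ^ M * μ.real {ω | ε * scl M < |Z ω|}) := by gcongr
          _ = D * ((M : ℝ) ^ (d - 1) * ((M : ℝ)⁻¹) ^ (2 * d)) +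
              (M : ℝ) ^ (d - 1) * (2 ^ M * μ.real {ω | ε * scl M < |Z ω|}) := by ring
          _ ≤ _ := by gcongr
    _ ≤ _ := by
        rw [sum_add_distrib, ← mul_sum]
        exact add_le_add (mul_le_mul_of_nonneg_left
          (hsum.sum_le_tsum _ fun _ _ => by positivity) hD) (hK _ hF)

variable {Y : (Fin d → ℕ) → Ω → ℝ}

/-- Borel-Cantelli over the blocks. -/
lemma ae_eventually_block (hd : 2 ≤ d) (hmeas : ∀ k : Fin d → ℕ, 1 ≤ k → Measurable (Y k))
    (hNA : NegAssocOn μ Y (Set.Ici 1))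
    (hid : ∀ k : Fin d → ℕ, 1 ≤ k → μ.map (Y k) = μ.map (Y 1))
    (hint : Integrable (Y 1) μ) (hmean : ∫ ω, Y 1 ω ∂μ = 0)
    (hmom : Integrable
      (fun ω => (Y 1 ω) ^ 2 * (plog |Y 1 ω|) ^ (d - 1) / plog (plog |Y 1 ω|)) μ)
    {v η : ℝ} (hη : 0 < η) (hv0 : 0 < v) (hv : ∫ ω, Y 1 ω ^ 2 ∂μ ≤ v) :
    ∀ᵐ ω ∂μ, ∀ᶠ m : Fin d → ℕ in atTop, ∀ k ≤ side m, |∑ i ∈ Icc 1 k, Y i ω| ≤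
        3 * √(2 * d * v * (∏ j, (k j : ℝ)) * plog (lvol m)) + 14 * η * scl (lvol m) := by
  have hZ := hmeas 1 le_rfl
  have h3 := integrable_sq_sqrt hd hZ hmom
  have h2 := integrable_sq hZ h3
  obtain ⟨D, ε, S, hD, hε, hev⟩ := block_event hd hmeas hNA hid hint hmean h2 h3 hη hv0 hv
  obtain ⟨M0, hM0⟩ := eventually_atTop.1 hev
  set P : (Fin d → ℕ) → Ω → Prop := fun m ω => ∀ k ≤ side m, |∑ i ∈ Icc 1 k, Y i ω| ≤
        3 * √(2 * d * v * (∏ j, (k j : ℝ)) * plog (lvol m)) + 14 * η * scl (lvol m) with hP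
  have hlarge : ∀ m : Fin d → ℕ, (fun _ => max S M0) ≤ m →
      μ.real {ω | ¬ P m ω} ≤ D * ((lvol m : ℝ)⁻¹) ^ (2 * d) +
        2 ^ lvol m * μ.real {ω | ε * scl (lvol m) < |Y 1 ω|} := by
    intro m hm
    refine hM0 (lvol m) ?_ m rfl fun j => (le_max_left _ _).trans (hm j)
    have h1 := le_lvol m ⟨0, by omega⟩
    have h2 : M0 ≤ m ⟨0, by omega⟩ := (le_max_right _ _).trans (hm _)
    omega
  have hsum : ∑' m : Fin d → ℕ, μ {ω | (fun _ => max S M0) ≤ m ∧ ¬ P m ω} ≠ ⊤ := by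
    refine ne_top_of_le_ne_top
      (summable_block_prob hd hZ hmom hD hε).tsum_ofReal_ne_top (ENNReal.tsum_le_tsum fun m => ?_)
    by_cases hm : (fun _ => max S M0) ≤ m
    · simp only [hm, true_and]
      rw [← ofReal_measureReal]
      exact ENNReal.ofReal_le_ofReal (hlarge m hm)
    · simp [hm]
  filter_upwards [ae_finite_setOfPred_mem hsum] with ω hω
  obtain ⟨b, hb⟩ := hω.bddAbove
  filter_upwards [eventually_ge_atTop (fun _ => max S M0), eventually_ge_atTop (b + 1)] with m h1 h2
  by_contra hcon
  have h3 : m ⟨0, by omega⟩ ≤ b ⟨0, by omega⟩ := hb (show m ∈ _ from ⟨h1, hcon⟩) _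
  have h4 : b ⟨0, by omega⟩ + 1 ≤ m ⟨0, by omega⟩ := h2 _
  omega

end Summation

/-! ### From blocks to the limit superior -/

section Final

variable {d : ℕ}

lemma tendsto_log_two : Tendsto (fun (n : Fin d → ℕ) j => Nat.log 2 (n j)) atTop atTop := by
  refine tendsto_atTop.2 fun a => ?_
  filter_upwards [eventually_ge_atTop fun j => 2 ^ a j] with n hn j
  exact Nat.le_log_of_pow_le (by norm_num) (hn j)

/-- Inside a block `log (lvol m)` and `log log |n|` are comparable. -/
lemma plog_lvol_le {m n : Fin d → ℕ} (hm : ∀ j, 16 ≤ m j) (hd : 2 ≤ d)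
    (hn : ∀ j, 2 ^ m j ≤ n j) :
    plog (lvol m) ≤ 2 * plog (plog (∏ j, (n j : ℝ))) := by
  set M := lvol m with hM
  have hsum : M = ∑ j, m j + d := by simp [hM, lvol, sum_add_distrib]
  have h16 : d * 16 ≤ ∑ j, m j := by
    simpa using card_nsmul_le_sum univ m 16 fun j _ => hm j
  have hM16 : (16 : ℝ) ≤ M := by exact_mod_cast (by omega : 16 ≤ M)
  have hhalf : (M : ℝ) / 2 ≤ (∑ j, m j : ℕ) := by
    rw [div_le_iff₀ (by norm_num)]
    exact_mod_cast (by omega : M ≤ (∑ j, m j) * 2)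
  have hprod : (2 : ℝ) ^ (∑ j, m j) ≤ ∏ j, (n j : ℝ) := by
    rw [← prod_pow_eq_pow_sum]
    exact prod_le_prod (fun _ _ => by positivity) fun j _ => by exact_mod_cast hn j
  have h1 : (M : ℝ) / 4 ≤ plog (∏ j, (n j : ℝ)) := by
    have hp : (0 : ℝ) < 2 ^ (∑ j, m j) := by positivity
    refine le_trans ?_ ((log_le_plog hp).trans (plog_mono hprod))
    rw [Real.log_pow]
    have := Real.log_two_gt_d9
    nlinarith
  have h2 : √(M : ℝ) ≤ M / 4 := by
    rw [Real.sqrt_le_left (by linarith)]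
    nlinarith
  have h3 := plog_mono (h2.trans h1)
  have h4 := log_le_plog (x := √(M : ℝ)) (Real.sqrt_pos.2 (by linarith))
  rw [Real.log_sqrt (by linarith)] at h4
  have h5 : plog (M : ℝ) = Real.log M := plog_eq (by
    have := Real.exp_one_lt_d9
    linarith)
  rw [h5]
  linarith

variable {Ω : Type} [MeasurableSpace Ω] {μ : Measure Ω} [IsProbabilityMeasure μ]
  {Y : (Fin d → ℕ) → Ω → ℝ}

lemma ae_eventually_bound (hd : 2 ≤ d) (hmeas : ∀ k : Fin d → ℕ, 1 ≤ k → Measurable (Y k))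
    (hNA : NegAssocOn μ Y (Set.Ici 1))
    (hid : ∀ k : Fin d → ℕ, 1 ≤ k → μ.map (Y k) = μ.map (Y 1))
    (hint : Integrable (Y 1) μ) (hmean : ∫ ω, Y 1 ω ∂μ = 0)
    (hmom : Integrable
      (fun ω => (Y 1 ω) ^ 2 * (plog |Y 1 ω|) ^ (d - 1) / plog (plog |Y 1 ω|)) μ)
    {v : ℝ} (hv0 : 0 < v) (hv : ∫ ω, Y 1 ω ^ 2 ∂μ ≤ v) :
    ∀ᵐ ω ∂μ, ∀ᶠ n : Fin d → ℕ in atTop, ∀ k ≤ n, |∑ i ∈ Icc 1 k, Y i ω| ≤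
      20 * √v * √(2 * d * (∏ i, (n i : ℝ)) * plog (plog (∏ i, (n i : ℝ)))) := by
  have hd0 : (0 : ℝ) < d := by exact_mod_cast (by omega : 0 < d)
  -- chosen so that the error `14 * η * scl (lvol m)` is at most a third of the main term for `k = n`
  set η := √(2 * d * v) / (14 * √(2 ^ d)) with hη
  have hη0 : 0 < η := by positivity
  filter_upwards [ae_eventually_block hd hmeas hNA hid hint hmean hmom hη0 hv0 hv] with ω hω
  filter_upwards [tendsto_log_two.eventually hω, eventually_ge_atTop 1,
    tendsto_log_two.eventually (eventually_ge_atTop fun _ => 16)] with n hn hn1 hn16 k hk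
  set m : Fin d → ℕ := fun j => Nat.log 2 (n j) with hm
  have hlow : ∀ j, 2 ^ m j ≤ n j := fun j => Nat.pow_log_le_self 2 (by
    have : 1 ≤ n j := hn1 j
    omega)
  have hside : n ≤ side m := fun j => (Nat.lt_pow_succ_log_self (by norm_num) (n j)).le
  set L := plog (plog (∏ i, (n i : ℝ)))
  have hL0 : 0 < L := plog_pos _
  have hl := plog_lvol_le hn16 hd hlow
  set l := plog (lvol m : ℝ) with hldef
  have hl0 : 0 < l := plog_pos _
  set N := ∏ i, (n i : ℝ) with hN
  have hN0 : 0 ≤ N := by positivity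
  have hkN : ∏ j, (k j : ℝ) ≤ N := by
    rw [hN]
    gcongr with j
    exact hk j
  have hvol : (2 : ℝ) ^ lvol m ≤ 2 ^ d * N := by
    have : (2 : ℝ) ^ lvol m = 2 ^ d * ∏ j, (2 : ℝ) ^ m j := by
      rw [prod_pow_eq_pow_sum, ← pow_add]
      congr 1
      simp [lvol, sum_add_distrib, add_comm]
    rw [this, hN]
    gcongr with j
    exact_mod_cast hlow j
  have e1 : √(2 * d * v * (∏ j, (k j : ℝ)) * l) ≤ √(2 * d * v) * √(N * l) := by
    rw [← Real.sqrt_mul (by positivity), ← mul_assoc]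
    exact Real.sqrt_le_sqrt (by gcongr)
  have e2 : 14 * η * scl (lvol m) ≤ √(2 * d * v) * √(N * l) := by
    calc 14 * η * scl (lvol m) ≤ 14 * η * √(2 ^ d * (N * l)) := by
          refine mul_le_mul_of_nonneg_left (Real.sqrt_le_sqrt ?_) (by positivity)
          rw [← mul_assoc, ← hldef]
          exact mul_le_mul_of_nonneg_right hvol hl0.le
      _ = 14 * η * √(2 ^ d) * √(N * l) := by
          rw [Real.sqrt_mul (by positivity)]; ring
      _ = _ := by
          rw [hη]
          field_simp
  have e3 : √(2 * d * v) * √(N * l) ≤ 2 * √v * √(2 * d * N * L) := by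
    rw [← Real.sqrt_mul (by positivity), mul_assoc 2 √v, ← Real.sqrt_mul hv0.le]
    refine Real.sqrt_le_iff.2 ⟨by positivity, ?_⟩
    rw [mul_pow, Real.sq_sqrt (by positivity)]
    have h0 : 0 ≤ d * v * N * L := by positivity
    calc 2 * d * v * (N * l) ≤ 2 * d * v * (N * (2 * L)) := by gcongr
      _ ≤ 2 ^ 2 * (v * (2 * d * N * L)) := by nlinarith
  have e4 : 0 ≤ √v * √(2 * d * N * L) := by positivity
  have := hn k (hk.trans hside)
  linarith

end Final

/-- **LIL upper bound for maximum partial sums of a negatively associated field**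
(Lemma 3.1). If `d ≥ 2` and `{Y_k : k ∈ ℕ^d}` is a negatively associated field of
identically distributed random variables with `E Y_1 = 0` and
`E[Y_1² log^{d-1}|Y_1| / log log |Y_1|] < ∞`, then a.s.
`limsup_{n → ∞} M_n / √(2 d |n| log log |n|) ≤ 20 (E Y_1²)^{1/2}`,
where `M_n = max_{k ≤ n} |T_k|`. -/
theorem lil_upper_bound_max_na_field
    {Ω : Type} [MeasurableSpace Ω] (μ : Measure Ω) [IsProbabilityMeasure μ]
    (d : ℕ) (hd : 2 ≤ d)
    (Y : (Fin d → ℕ) → Ω → ℝ)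
    (hmeas : ∀ k : Fin d → ℕ, 1 ≤ k → Measurable (Y k))
    (hNA : NegAssocOn μ Y (Set.Ici 1))
    (hid : ∀ k : Fin d → ℕ, 1 ≤ k → μ.map (Y k) = μ.map (Y 1))
    (hint : Integrable (Y 1) μ)
    (hmean : ∫ ω, Y 1 ω ∂μ = 0)
    (hmom : Integrable
      (fun ω => (Y 1 ω) ^ 2 * (plog |Y 1 ω|) ^ (d - 1) / plog (plog |Y 1 ω|)) μ) :
    ∀ᵐ ω ∂μ,
      Filter.limsup (fun n : Fin d → ℕ =>
          (((⨆ k ∈ Finset.Icc (1 : Fin d → ℕ) n,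
              |∑ i ∈ Finset.Icc (1 : Fin d → ℕ) k, Y i ω|) /
            Real.sqrt (2 * d * (∏ i, (n i : ℝ)) *
              plog (plog (∏ i, (n i : ℝ))))) : EReal))
        Filter.atTop ≤ ((20 * Real.sqrt (∫ ω, (Y 1 ω) ^ 2 ∂μ) : ℝ) : EReal) := by
  set σ2 := ∫ ω, (Y 1 ω) ^ 2 ∂μ with hσ
  have hσ0 : 0 ≤ σ2 := integral_nonneg fun ω => sq_nonneg _
  have hall : ∀ᵐ ω ∂μ, ∀ r : ℕ, ∀ᶠ n : Fin d → ℕ in atTop, ∀ k ≤ n,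
      |∑ i ∈ Icc 1 k, Y i ω| ≤ 20 * √(σ2 + 1 / ((r : ℝ) + 1)) *
        √(2 * d * (∏ i, (n i : ℝ)) * plog (plog (∏ i, (n i : ℝ)))) := by
    refine ae_all_iff.2 fun r => ?_
    have hr : (0 : ℝ) < 1 / ((r : ℝ) + 1) := by positivity
    exact ae_eventually_bound hd hmeas hNA hid hint hmean hmom (by linarith) (by linarith)
  filter_upwards [hall] with ω hω
  have hb : ∀ r : ℕ, limsup (fun n : Fin d → ℕ =>
          (((⨆ k ∈ Finset.Icc (1 : Fin d → ℕ) n,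
              |∑ i ∈ Finset.Icc (1 : Fin d → ℕ) k, Y i ω|) /
            Real.sqrt (2 * d * (∏ i, (n i : ℝ)) *
              plog (plog (∏ i, (n i : ℝ))))) : EReal)) atTop ≤
      ((20 * √(σ2 + 1 / ((r : ℝ) + 1)) : ℝ) : EReal) := by
    intro r
    refine limsup_le_of_le (h := ?_)
    filter_upwards [hω r, eventually_ge_atTop 1] with n hn hn1
    have hd0 : (0 : ℝ) < d := by exact_mod_cast (by omega : 0 < d)
    have hprod : 0 < ∏ i, (n i : ℝ) := prod_pos fun j _ => by exact_mod_cast hn1 j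
    have hL := plog_pos (plog (∏ i, (n i : ℝ)))
    have hw : 0 < √(2 * d * (∏ i, (n i : ℝ)) * plog (plog (∏ i, (n i : ℝ)))) := by positivity
    rw [← EReal.coe_div, EReal.coe_le_coe_iff, div_le_iff₀ hw]
    -- the inner supremum ranges over a proposition and is `0` when that fails
    refine Real.iSup_le (fun k => Real.iSup_le (fun hk => hn k (mem_Icc.1 hk).2) ?_) ?_ <;>
      positivity
  have hlim : Tendsto (fun r : ℕ => ((20 * √(σ2 + 1 / ((r : ℝ) + 1)) : ℝ) : EReal)) atTop
      (nhds ((20 * √σ2 : ℝ) : EReal)) := by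
    refine (continuous_coe_real_ereal.tendsto _).comp ?_
    have h1 : Tendsto (fun r : ℕ => σ2 + 1 / ((r : ℝ) + 1)) atTop (nhds (σ2 + 0)) :=
      tendsto_one_div_add_atTop_nhds_zero_nat.const_add σ2
    rw [add_zero] at h1
    exact ((Real.continuous_sqrt.tendsto σ2).comp h1).const_mul 20
  exact ge_of_tendsto' hlim hb
end
end

section
/- Let {Y_k : k ≤ n}, with n ∈ ℕ^d, be a negatively associated field of random variables with zero means and finite second moments, let T_n = Σ_{i ≤ n} Y_i and B_n² = Σ_{k ≤ n} E[Y_k²]. Then for all x > 0 and a > 0, P(T_n ≥ x) ≤ P( max_{k ≤ n} Y_k > a ) + exp{ x/a − (x/a + B_n²/a²) ln(xa/B_n² + 1) }. -/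
/-!
The variables are truncated from above, `Z_k = min (Y_k, a)`. Off the event `max Y_k > a` the sums of
the `Y_k` and of the `Z_k` agree, so it suffices to bound `P(∑ Z_k ≥ x)` by Chernoff's method.

Since `z ↦ exp (t * min z a)` is non-decreasing, negative association gives
`E exp (t ∑ Z_k) ≤ ∏ E exp (t Z_k)` by induction on the index set (`integral_exp_sum_le_prod`).
As `u ↦ (exp u - 1 - u) / u ^ 2` is non-decreasing (`exp_sub_mul_sq_le`), for `z ≤ a` one has
`exp (t z) ≤ 1 + t z + (exp (t a) - 1 - t a) / a ^ 2 * z ^ 2`; together with `E Z_k ≤ E Y_k = 0` and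
`Z_k ^ 2 ≤ Y_k ^ 2` this yields `E exp (t Z_k) ≤ exp ((exp (t a) - 1 - t a) / a ^ 2 * E Y_k ^ 2)`
(`integral_exp_trunc_le`). The choice `t = log (x a / B ^ 2 + 1) / a` gives the stated exponent.
When `B = 0` the convention `x * a / 0 = 0` makes the exponent `x / a > 0`, and the bound is trivial.
-/

open MeasureTheory Filter Finset

noncomputable section

/-- Monotonicity of `u ↦ (exp u - 1 - u) / u ^ 2`, cleared of denominators, with `v > 0` the larger
argument. For `u ≤ 0` both quotients are compared with `1 / 2`; for `u = s * v` with `s ∈ [0, 1]` the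
exponential series are compared term by term. -/
lemma exp_sub_mul_sq_le {u v : ℝ} (hv : 0 < v) (huv : u ≤ v) :
    (Real.exp u - 1 - u) * v ^ 2 ≤ u ^ 2 * (Real.exp v - 1 - v) := by
  rcases le_total u 0 with hu | hu
  · have h1 := Real.quadratic_le_exp_of_nonneg hv.le
    have h2 := Real.quadratic_le_exp_of_nonneg (neg_nonneg.mpr hu)
    have h3 : Real.exp u ≤ 1 + u + u ^ 2 / 2 := by
      have h4 : Real.exp u * Real.exp (-u) = 1 := by rw [← Real.exp_add]; simp
      have h6 : 0 ≤ 1 + u + u ^ 2 / 2 := by nlinarith [sq_nonneg (u + 1)]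
      -- `(1 - u + u ^ 2 / 2) * (1 + u + u ^ 2 / 2) = 1 + u ^ 4 / 4 ≥ 1`
      have h7 : 1 ≤ (1 + u + u ^ 2 / 2) * Real.exp (-u) := by
        calc (1 : ℝ) ≤ (1 + u + u ^ 2 / 2) * (1 + -u + (-u) ^ 2 / 2) := by
              nlinarith [sq_nonneg (u ^ 2)]
          _ ≤ _ := mul_le_mul_of_nonneg_left h2 h6
      exact le_of_mul_le_mul_right (h4.trans_le h7) (Real.exp_pos _)
    nlinarith [mul_le_mul_of_nonneg_right h3 (sq_nonneg v),
      mul_le_mul_of_nonneg_left h1 (sq_nonneg u)]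
  · obtain ⟨s, rfl⟩ : ∃ s, u = s * v := ⟨u / v, by field_simp⟩
    have hs0 : 0 ≤ s := nonneg_of_mul_nonneg_left hu hv
    have hs1 : s ≤ 1 := by
      by_contra h
      nlinarith
    have hexp : ∀ y : ℝ, HasSum (fun k : ℕ => y ^ k / (k.factorial : ℝ)) (Real.exp y) := by
      intro y
      rw [Real.exp_eq_exp_ℝ]
      exact NormedSpace.expSeries_div_hasSum_exp y
    have hsum := ((hexp v).mul_left (s ^ 2)).sub (hexp (s * v))
    have hle := sum_le_hasSum (Finset.range 2) (fun k hk => ?_) hsum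
    · simp [Finset.sum_range_succ] at hle
      have := mul_le_mul_of_nonneg_right hle (sq_nonneg v)
      nlinarith
    · have hk2 : 2 ≤ k := by
        simp only [Finset.mem_range] at hk
        omega
      have h1 : s ^ k ≤ s ^ 2 := pow_le_pow_of_le_one hs0 hs1 hk2
      have h2 : (0 : ℝ) ≤ v ^ k / (k.factorial : ℝ) := by positivity
      have h3 : s ^ 2 * (v ^ k / (k.factorial : ℝ)) - (s * v) ^ k / (k.factorial : ℝ)
          = (s ^ 2 - s ^ k) * (v ^ k / (k.factorial : ℝ)) := by
        rw [mul_pow]; ring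
      rw [h3]
      exact mul_nonneg (by linarith) h2

lemma integrable_exp_trunc {Ω : Type} [MeasurableSpace Ω] (μ : Measure Ω) [IsProbabilityMeasure μ]
    {ι : Type} (Y : ι → Ω → ℝ) (S : Finset ι) (hmeas : ∀ k ∈ S, Measurable (Y k))
    {t : ℝ} (ht : 0 ≤ t) (a : ℝ) :
    Integrable (fun ω => Real.exp (∑ i ∈ S, t * min (Y i ω) a)) μ := by
  have hm : Measurable (fun ω => ∑ i ∈ S, t * min (Y i ω) a) :=
    Finset.measurable_fun_sum S fun i hi => ((hmeas i hi).min measurable_const).const_mul t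
  refine Integrable.of_bound hm.exp.aestronglyMeasurable (Real.exp (∑ _i ∈ S, t * a)) ?_
  refine Eventually.of_forall fun ω => ?_
  rw [Real.norm_eq_abs, abs_of_pos (Real.exp_pos _), Real.exp_le_exp]
  exact Finset.sum_le_sum fun i _ => mul_le_mul_of_nonneg_left (min_le_right _ _) ht

/-- Negative association makes the Laplace transform of the truncated sum submultiplicative. -/
lemma integral_exp_sum_le_prod {Ω : Type} [MeasurableSpace Ω] (μ : Measure Ω)
    [IsProbabilityMeasure μ] {ι : Type} (Y : ι → Ω → ℝ) (U : Set ι) (hNA : NegAssocOn μ Y U)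
    {t : ℝ} (ht : 0 ≤ t) (a : ℝ) (S : Finset ι) (hS : ↑S ⊆ U)
    (hmeas : ∀ k ∈ S, Measurable (Y k)) :
    ∫ ω, Real.exp (∑ i ∈ S, t * min (Y i ω) a) ∂μ ≤
      ∏ i ∈ S, ∫ ω, Real.exp (t * min (Y i ω) a) ∂μ := by
  classical
  induction S using Finset.induction_on with
  | empty => simp
  | insert i S hi ih =>
    have hSU : ↑S ⊆ U := fun j hj => hS (by simp_all)
    have hiU : ↑({i} : Finset ι) ⊆ U := fun j hj => hS (by simp_all)
    have hmS : ∀ k ∈ S, Measurable (Y k) := fun k hk => hmeas k (Finset.mem_insert_of_mem hk)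
    have hmi : ∀ k ∈ ({i} : Finset ι), Measurable (Y k) := fun k hk => hmeas k (by simp_all)
    have hsum : ∀ (T : Finset ι) (ω : Ω),
        ∑ j : ↥T, t * min (Y j ω) a = ∑ j ∈ T, t * min (Y j ω) a :=
      fun T ω => Finset.sum_coe_sort T (fun j => t * min (Y j ω) a)
    have hmono : ∀ T : Finset ι,
        Monotone (fun v : ↥T → ℝ => Real.exp (∑ j : ↥T, t * min (v j) a)) := by
      intro T v w hvw
      exact Real.exp_le_exp.mpr (Finset.sum_le_sum fun j _ =>
        mul_le_mul_of_nonneg_left (min_le_min_right a (hvw j)) ht)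
    have hprod : ∀ ω, Real.exp (∑ j ∈ {i}, t * min (Y j ω) a) *
        Real.exp (∑ j ∈ S, t * min (Y j ω) a)
          = Real.exp (∑ j ∈ insert i S, t * min (Y j ω) a) := by
      intro ω
      rw [← Real.exp_add, Finset.sum_insert hi, Finset.sum_singleton]
    have key := hNA {i} S hiU hSU (by simpa using hi) _ _ (hmono _) (hmono _)
    simp only [hsum, hprod] at key
    have key' := key (integrable_exp_trunc μ Y _ hmi ht a) (integrable_exp_trunc μ Y _ hmS ht a)
      (integrable_exp_trunc μ Y _ hmeas ht a)
    rw [Finset.prod_insert hi]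
    refine key'.trans ?_
    simp only [Finset.sum_singleton]
    exact mul_le_mul_of_nonneg_left (ih hSU hmS) (integral_nonneg fun ω => (Real.exp_pos _).le)

/-- The one-variable Bennett bound for a centred variable truncated from above at `a`. -/
lemma integral_exp_trunc_le {Ω : Type} [MeasurableSpace Ω] (μ : Measure Ω)
    [IsProbabilityMeasure μ] (Y : Ω → ℝ) (hY : Measurable Y) (hmean : ∫ ω, Y ω ∂μ = 0)
    (hL2 : Integrable (fun ω => (Y ω) ^ 2) μ) {t a : ℝ} (ht : 0 < t) (ha : 0 < a) :
    ∫ ω, Real.exp (t * min (Y ω) a) ∂μ ≤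
      Real.exp ((Real.exp (t * a) - 1 - t * a) / a ^ 2 * ∫ ω, (Y ω) ^ 2 ∂μ) := by
  have hint : Integrable Y μ :=
    ((memLp_two_iff_integrable_sq hY.aestronglyMeasurable).mpr hL2).integrable (by norm_num)
  set c := (Real.exp (t * a) - 1 - t * a) / a ^ 2 with hc
  have hc0 : 0 ≤ c := by
    have := Real.add_one_le_exp (t * a)
    exact div_nonneg (by linarith) (by positivity)
  have hpt : ∀ ω, Real.exp (t * min (Y ω) a) ≤ 1 + t * Y ω + c * (Y ω) ^ 2 := by
    intro ω
    set z := min (Y ω) a with hz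
    have hza : z ≤ a := min_le_right _ _
    have hzY : z ≤ Y ω := min_le_left _ _
    have hzsq : z ^ 2 ≤ (Y ω) ^ 2 := by
      rcases le_total (Y ω) a with h | h
      · rw [hz, min_eq_left h]
      · rw [hz, min_eq_right h]; gcongr
    have hk := exp_sub_mul_sq_le (mul_pos ht ha) (mul_le_mul_of_nonneg_left hza ht.le)
    have hk' : Real.exp (t * z) - 1 - t * z ≤ c * z ^ 2 := by
      rw [hc, div_mul_eq_mul_div, le_div_iff₀ (by positivity)]
      have ht2 : 0 < t ^ 2 := by positivity
      refine le_of_mul_le_mul_left ?_ ht2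
      nlinarith
    nlinarith [mul_le_mul_of_nonneg_left hzsq hc0, mul_le_mul_of_nonneg_left hzY ht.le]
  have hi1 : Integrable (fun ω => Real.exp (t * min (Y ω) a)) μ := by
    simpa using integrable_exp_trunc μ (fun _ : Unit => Y) {()} (fun _ _ => hY) ht.le a
  have hi3 : Integrable (fun ω => 1 + t * Y ω) μ := (integrable_const 1).add (hint.const_mul t)
  calc ∫ ω, Real.exp (t * min (Y ω) a) ∂μ
      ≤ ∫ ω, (1 + t * Y ω + c * (Y ω) ^ 2) ∂μ :=
        integral_mono hi1 (hi3.add (hL2.const_mul c)) hpt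
    _ = c * ∫ ω, (Y ω) ^ 2 ∂μ + 1 := by
        rw [integral_add hi3 (hL2.const_mul c), integral_add (integrable_const 1)
          (hint.const_mul t), integral_const_mul, integral_const_mul, hmean]
        simp
        ring
    _ ≤ _ := Real.add_one_le_exp _

/-- **Exponential inequality of Su et al. (1997) for sums of a negatively associated field.**
For all `x > 0` and `a > 0`,
`P(T_n ≥ x) ≤ P(max_{k ≤ n} Y_k > a) + exp{ x/a − (x/a + B_n²/a²) ln(x a / B_n² + 1) }`. -/
theorem na_field_su_exponential_inequality
    {Ω : Type} [MeasurableSpace Ω] (μ : Measure Ω) [IsProbabilityMeasure μ]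
    (d : ℕ) (n : Fin d → ℕ) (hn : (1 : Fin d → ℕ) ≤ n)
    (Y : (Fin d → ℕ) → Ω → ℝ)
    (hmeas : ∀ k ∈ Finset.Icc (1 : Fin d → ℕ) n, Measurable (Y k))
    (hNA : NegAssocOn μ Y (Set.Icc 1 n))
    (hmean : ∀ k ∈ Finset.Icc (1 : Fin d → ℕ) n, ∫ ω, Y k ω ∂μ = 0)
    (hL2 : ∀ k ∈ Finset.Icc (1 : Fin d → ℕ) n, Integrable (fun ω => (Y k ω) ^ 2) μ)
    (x a : ℝ) (hx : 0 < x) (ha : 0 < a) :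
    μ {ω | x ≤ ∑ i ∈ Finset.Icc (1 : Fin d → ℕ) n, Y i ω} ≤
      μ {ω | a < (Finset.Icc (1 : Fin d → ℕ) n).sup'
          (Finset.nonempty_Icc.mpr hn) (fun k => Y k ω)} +
      ENNReal.ofReal (Real.exp (x / a -
        (x / a + (∑ k ∈ Finset.Icc (1 : Fin d → ℕ) n, ∫ ω, (Y k ω) ^ 2 ∂μ) / a ^ 2) *
          Real.log (x * a / (∑ k ∈ Finset.Icc (1 : Fin d → ℕ) n, ∫ ω, (Y k ω) ^ 2 ∂μ) + 1))) := by
  classical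
  set I := Finset.Icc (1 : Fin d → ℕ) n with hI
  set V := ∑ k ∈ I, ∫ ω, (Y k ω) ^ 2 ∂μ with hV
  have hV0 : 0 ≤ V := Finset.sum_nonneg fun k _ => integral_nonneg fun ω => sq_nonneg _
  rcases hV0.eq_or_lt with hV0 | hVpos
  · rw [← hV0]
    refine prob_le_one.trans (le_add_left ?_)
    rw [ENNReal.one_le_ofReal]
    simp only [div_zero, zero_add, Real.log_one, mul_zero, sub_zero]
    exact Real.one_le_exp (by positivity)
  set L := Real.log (x * a / V + 1) with hL
  have hq : 0 < x * a / V := by positivity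
  have hLpos : 0 < L := Real.log_pos (by linarith)
  have hexpL : Real.exp L = x * a / V + 1 := Real.exp_log (by linarith)
  set t := L / a with ht_def
  have ht : 0 < t := by positivity
  have hta : t * a = L := by rw [ht_def]; field_simp
  have hint := integrable_exp_trunc μ Y I hmeas ht.le a
  have hsub : {ω | x ≤ ∑ i ∈ I, Y i ω} ⊆
      {ω | a < I.sup' (Finset.nonempty_Icc.mpr hn) (fun k => Y k ω)} ∪
        {ω | x ≤ ∑ i ∈ I, min (Y i ω) a} := by
    intro ω hω
    by_cases h : a < I.sup' (Finset.nonempty_Icc.mpr hn) (fun k => Y k ω)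
    · exact Or.inl h
    · refine Or.inr ?_
      rw [not_lt, Finset.sup'_le_iff] at h
      have he : ∑ i ∈ I, min (Y i ω) a = ∑ i ∈ I, Y i ω :=
        Finset.sum_congr rfl fun i hi => min_eq_left (h i hi)
      simpa only [Set.mem_ofPred_eq, he] using hω
  refine (measure_mono hsub).trans ((measure_union_le _ _).trans ?_)
  gcongr
  have hmgf : ∫ ω, Real.exp (∑ i ∈ I, t * min (Y i ω) a) ∂μ ≤
      Real.exp ((Real.exp (t * a) - 1 - t * a) / a ^ 2 * V) := by
    refine (integral_exp_sum_le_prod μ Y (Set.Icc 1 n) hNA ht.le a I (by simp [hI]) hmeas).trans ?_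
    rw [hV, Finset.mul_sum, Real.exp_sum]
    exact Finset.prod_le_prod (fun i _ => integral_nonneg fun ω => (Real.exp_pos _).le)
      fun i hi => integral_exp_trunc_le μ (Y i) (hmeas i hi) (hmean i hi) (hL2 i hi) ht ha
  have hset : {ω | x ≤ ∑ i ∈ I, min (Y i ω) a} =
      {ω | Real.exp (t * x) ≤ Real.exp (∑ i ∈ I, t * min (Y i ω) a)} := by
    ext ω
    simp only [Set.mem_ofPred_eq, Real.exp_le_exp, ← Finset.mul_sum, mul_le_mul_iff_right₀ ht]
  have hmarkov := mul_meas_ge_le_integral_of_nonneg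
    (Eventually.of_forall fun ω => (Real.exp_pos (∑ i ∈ I, t * min (Y i ω) a)).le) hint
    (Real.exp (t * x))
  rw [← hset] at hmarkov
  rw [← ENNReal.ofReal_toReal (measure_ne_top μ {ω | x ≤ ∑ i ∈ I, min (Y i ω) a})]
  refine ENNReal.ofReal_le_ofReal ?_
  refine le_of_mul_le_mul_left ((hmarkov.trans hmgf).trans_eq ?_) (Real.exp_pos (t * x))
  rw [← Real.exp_add, hta, hexpL, ht_def]
  congr 1
  field_simp
  ring
end
end

section
/- Let d ≥ 1 and let {X_k : k ∈ ℕ^d} be a negatively associated field of random variables. Fix C > 0 and for each k ∈ ℕ^d let A_k = { |X_k| ≥ 2C (2d |k| log log |k|)^{1/2} }. Then for any m ∈ ℕ^d, ( 1 − P( ⋃_{k ≥ m} A_k ) )² · Σ_{k ≥ m} P(A_k) ≤ 2 P( ⋃_{k ≥ m} A_k ). -/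
/-!
Each `A_k` is the union of the one-sided events `{a_k ≤ X_k}` and `{a_k ≤ -X_k}`, where `a_k` is its
threshold. Applying negative association to two distinct indices and to indicators of half-lines
shows that the upper-tail events are pairwise negatively correlated, and so are the lower-tail
events (`NegAssocOn.upper_tail` for `X` and, by `NegAssocOn.neg`, for `-X`). For a finite family of
pairwise negatively correlated events `B_k` with union of probability at most `p`, the Chung–Erdős
second moment argument (`sum_le_union_of_negCorr`) gives `(1 - p) ∑ P(B_k) ≤ p`. Taking
`p = P(⋃ A_k)`, adding the bounds for the two tails and passing from finite sums to the series
yields `(1 - p) ∑ P(A_k) ≤ 2 p`, which is stronger than the claim because `1 - p ≤ 1`.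
-/

open MeasureTheory Filter Finset

noncomputable section

/-- Chung–Erdős inequality for pairwise negatively correlated events: with `S = ∑ P(B_k)` and
`p = P(⋃ B_k)`, one has `S / (1 + S) ≤ p`, stated without division. -/
theorem sum_le_union_of_negCorr {Ω ι : Type} [MeasurableSpace Ω] (μ : Measure Ω)
    [IsProbabilityMeasure μ] (F : Finset ι) (B : ι → Set Ω)
    (hB : ∀ i ∈ F, MeasurableSet (B i))
    (hneg : ∀ i ∈ F, ∀ j ∈ F, i ≠ j → μ.real (B i ∩ B j) ≤ μ.real (B i) * μ.real (B j)) :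
    ∑ i ∈ F, μ.real (B i) ≤ μ.real (⋃ i ∈ F, B i) * (1 + ∑ i ∈ F, μ.real (B i)) := by
  classical
  set S := ∑ i ∈ F, μ.real (B i) with hS
  have hS0 : 0 ≤ S := Finset.sum_nonneg fun _ _ => measureReal_nonneg
  set U := ⋃ i ∈ F, B i with hU
  have hUm : MeasurableSet U := Finset.measurableSet_biUnion F hB
  set N : Ω → ℝ := fun ω => ∑ i ∈ F, (B i).indicator (fun _ => (1 : ℝ)) ω with hN
  have hint : ∀ s : Set Ω, MeasurableSet s → Integrable (s.indicator (fun _ => (1 : ℝ))) μ :=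
    fun s hs => (integrable_const _).indicator hs
  have hval : ∀ s : Set Ω, MeasurableSet s → ∫ ω, s.indicator (fun _ => (1 : ℝ)) ω ∂μ = μ.real s :=
    fun s hs => by simp [integral_indicator_const, hs]
  have hNi : Integrable N μ := integrable_finsetSum _ fun i hi => hint _ (hB i hi)
  have hEN : ∫ ω, N ω ∂μ = S := by
    rw [hN, integral_finsetSum _ fun i hi => hint _ (hB i hi)]
    exact Finset.sum_congr rfl fun i hi => hval _ (hB i hi)
  have hN2 : (fun ω => N ω ^ 2) = fun ω => ∑ i ∈ F, ∑ j ∈ F,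
      (B i ∩ B j).indicator (fun _ => (1 : ℝ)) ω := by
    funext ω
    rw [hN, sq, Finset.sum_mul_sum]
    refine Finset.sum_congr rfl fun i _ => Finset.sum_congr rfl fun j _ => ?_
    by_cases h1 : ω ∈ B i <;> by_cases h2 : ω ∈ B j <;> simp [h1, h2]
  have hij : ∀ i ∈ F, ∀ j ∈ F, Integrable ((B i ∩ B j).indicator (fun _ => (1 : ℝ))) μ :=
    fun i hi j hj => hint _ ((hB i hi).inter (hB j hj))
  have hN2i : Integrable (fun ω => N ω ^ 2) μ := by
    rw [hN2]
    exact integrable_finsetSum _ fun i hi => integrable_finsetSum _ fun j hj => hij i hi j hj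
  have hEN2 : ∫ ω, N ω ^ 2 ∂μ ≤ S + S ^ 2 := by
    rw [hN2, integral_finsetSum _ fun i hi => integrable_finsetSum _ fun j hj => hij i hi j hj]
    have hrow : ∀ i ∈ F, ∫ ω, ∑ j ∈ F, (B i ∩ B j).indicator (fun _ => (1 : ℝ)) ω ∂μ ≤
        μ.real (B i) + μ.real (B i) * S := by
      intro i hi
      rw [integral_finsetSum _ fun j hj => hij i hi j hj, hS, Finset.mul_sum]
      have hterm : ∀ j ∈ F, ∫ ω, (B i ∩ B j).indicator (fun _ => (1 : ℝ)) ω ∂μ ≤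
          (if i = j then μ.real (B i) else 0) + μ.real (B i) * μ.real (B j) := by
        intro j hj
        rw [hval _ ((hB i hi).inter (hB j hj))]
        split_ifs with h
        · subst h
          rw [Set.inter_self]
          nlinarith [measureReal_nonneg (μ := μ) (s := B i)]
        · simpa using hneg i hi j hj h
      refine (Finset.sum_le_sum hterm).trans ?_
      rw [Finset.sum_add_distrib, Finset.sum_ite_eq]
      simp [hi]
    refine (Finset.sum_le_sum hrow).trans ?_
    rw [Finset.sum_add_distrib, ← Finset.sum_mul, ← hS, sq]
  -- On `U`, `(t N - 1)² ≥ 0` gives `2 t N - t² N² ≤ 1`; off `U`, `N = 0`.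
  have hpt : ∀ t : ℝ, 2 * t * S - t ^ 2 * (S + S ^ 2) ≤ μ.real U := by
    intro t
    have h1 : ∫ ω, (2 * t * N ω - t ^ 2 * N ω ^ 2) ∂μ ≤
        ∫ ω, U.indicator (fun _ => (1 : ℝ)) ω ∂μ := by
      refine integral_mono ((hNi.const_mul _).sub (hN2i.const_mul _)) (hint U hUm) fun ω => ?_
      by_cases h : ω ∈ U
      · simp only [Set.indicator_of_mem h]
        nlinarith [sq_nonneg (t * N ω - 1)]
      · have h0 : N ω = 0 := Finset.sum_eq_zero fun i hi =>
          Set.indicator_of_notMem (fun hb => h (Set.mem_biUnion hi hb)) _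
        simp [h, h0]
    rw [integral_sub (hNi.const_mul _) (hN2i.const_mul _), integral_const_mul,
      integral_const_mul, hEN, hval U hUm] at h1
    nlinarith [mul_le_mul_of_nonneg_left hEN2 (sq_nonneg t)]
  -- `t = 1 / (1 + S)` maximizes the left-hand side.
  have h := hpt (1 / (1 + S))
  have hpos : 0 < 1 + S := by linarith
  have he : 2 * (1 / (1 + S)) * S - (1 / (1 + S)) ^ 2 * (S + S ^ 2) = S / (1 + S) := by
    field_simp
    ring
  rw [he, div_le_iff₀ hpos] at h
  exact h

theorem NegAssocOn.upper_tail {Ω : Type} [MeasurableSpace Ω] {μ : Measure Ω}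
    [IsProbabilityMeasure μ] {ι : Type} {X : ι → Ω → ℝ} {S : Set ι} (hNA : NegAssocOn μ X S)
    (hmeas : ∀ k ∈ S, Measurable (X k)) (a : ι → ℝ) {i j : ι} (hi : i ∈ S) (hj : j ∈ S)
    (hij : i ≠ j) :
    μ.real ({ω | a i ≤ X i ω} ∩ {ω | a j ≤ X j ω}) ≤
      μ.real {ω | a i ≤ X i ω} * μ.real {ω | a j ≤ X j ω} := by
  classical
  have hm : ∀ k ∈ S, MeasurableSet {ω | a k ≤ X k ω} := fun k hk =>
    measurableSet_le measurable_const (hmeas k hk)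
  have mono : ∀ k : ι, Monotone fun x : ({k} : Finset ι) → ℝ =>
      (Set.Ici (a k)).indicator (fun _ => (1 : ℝ)) (x ⟨k, by simp⟩) := by
    intro k x y hxy
    have := hxy ⟨k, by simp⟩
    simp only [Set.indicator_apply, Set.mem_Ici]
    split_ifs <;> linarith
  have hfun : ∀ k : ι, (fun ω => (Set.Ici (a k)).indicator (fun _ => (1 : ℝ)) (X k ω)) =
      {ω | a k ≤ X k ω}.indicator (fun _ => (1 : ℝ)) := by
    intro k; funext ω; simp [Set.indicator_apply]
  have hprod : (fun ω => (Set.Ici (a i)).indicator (fun _ => (1 : ℝ)) (X i ω) *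
      (Set.Ici (a j)).indicator (fun _ => (1 : ℝ)) (X j ω)) =
      ({ω | a i ≤ X i ω} ∩ {ω | a j ≤ X j ω}).indicator (fun _ => (1 : ℝ)) := by
    funext ω
    by_cases h1 : a i ≤ X i ω <;> by_cases h2 : a j ≤ X j ω <;> simp [h1, h2]
  have hint : ∀ s : Set Ω, MeasurableSet s → Integrable (s.indicator (fun _ => (1 : ℝ))) μ :=
    fun s hs => (integrable_const _).indicator hs
  have key := hNA {i} {j} (by simpa using hi) (by simpa using hj) (by simpa using hij)
    _ _ (mono i) (mono j)
    (by simpa only [hfun] using hint _ (hm i hi))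
    (by simpa only [hfun] using hint _ (hm j hj))
    (by simpa only [hprod] using hint _ ((hm i hi).inter (hm j hj)))
  simp only [hprod, hfun] at key
  simpa [integral_indicator_const, hm i hi, hm j hj, (hm i hi).inter (hm j hj)] using key

/-- Negative association is preserved under a global sign change: apply it to
`x ↦ -f (-x)` and `x ↦ -g (-x)`, which are monotone; the outer signs cancel in both products. -/
theorem NegAssocOn.neg {Ω : Type} [MeasurableSpace Ω] {μ : Measure Ω} {ι : Type}
    {X : ι → Ω → ℝ} {S : Set ι} (hNA : NegAssocOn μ X S) :
    NegAssocOn μ (fun k ω => -X k ω) S := by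
  intro A B hA hB hAB f g hf hg hfi hgi hfg
  have key := hNA A B hA hB hAB (fun x => -f (fun i => -x i)) (fun x => -g (fun i => -x i))
    (fun x y hxy => neg_le_neg (hf fun i => neg_le_neg (hxy i)))
    (fun x y hxy => neg_le_neg (hg fun i => neg_le_neg (hxy i)))
    hfi.neg hgi.neg (by simpa only [neg_mul_neg] using hfg)
  simpa only [neg_mul_neg, integral_neg] using key

/-- **Generalized Borel–Cantelli inequality for a negatively associated field** ((2.29) in
the proof of Theorem 3). With `A_k = {|X_k| ≥ 2C (2 d |k| log log |k|)^{1/2}}`, for every `m`,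
`(1 − P(⋃_{k ≥ m} A_k))² Σ_{k ≥ m} P(A_k) ≤ 2 P(⋃_{k ≥ m} A_k)`. -/
theorem na_field_generalized_borel_cantelli
    {Ω : Type} [MeasurableSpace Ω] (μ : Measure Ω) [IsProbabilityMeasure μ]
    (d : ℕ) (hd : 1 ≤ d)
    (X : (Fin d → ℕ) → Ω → ℝ)
    (hmeas : ∀ k : Fin d → ℕ, 1 ≤ k → Measurable (X k))
    (hNA : NegAssocOn μ X (Set.Ici 1))
    (C : ℝ) (hC : 0 < C)
    (A : (Fin d → ℕ) → Set Ω)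
    (hA : ∀ k : Fin d → ℕ, A k = {ω |
      2 * C * Real.sqrt (2 * d * (∏ i, (k i : ℝ)) * plog (plog (∏ i, (k i : ℝ))))
        ≤ |X k ω|})
    (m : Fin d → ℕ) (hm : (1 : Fin d → ℕ) ≤ m) :
    (1 - μ (⋃ k : Fin d → ℕ, ⋃ _ : m ≤ k, A k)) ^ 2 *
        ∑' k : {k : Fin d → ℕ // m ≤ k}, μ (A k.1) ≤
      2 * μ (⋃ k : Fin d → ℕ, ⋃ _ : m ≤ k, A k) := by

  set U := ⋃ k : Fin d → ℕ, ⋃ _ : m ≤ k, A k with hU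
  set a : (Fin d → ℕ) → ℝ := fun k =>
    2 * C * Real.sqrt (2 * d * (∏ i, (k i : ℝ)) * plog (plog (∏ i, (k i : ℝ)))) with ha
  have hAa : ∀ k, A k = {ω | a k ≤ X k ω} ∪ {ω | a k ≤ -X k ω} := by
    intro k
    rw [hA k]
    ext ω
    simp [ha, le_abs]
  have hp1 : μ.real U ≤ 1 := measureReal_le_one
  -- The one-sided bound, common to the upper tails (`Y = X`) and the lower tails (`Y = -X`).
  have side : ∀ Y : (Fin d → ℕ) → Ω → ℝ, (∀ k ∈ Set.Ici (1 : Fin d → ℕ), Measurable (Y k)) →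
      NegAssocOn μ Y (Set.Ici 1) → (∀ k, {ω | a k ≤ Y k ω} ⊆ A k) →
      ∀ F : Finset {k : Fin d → ℕ // m ≤ k},
        (1 - μ.real U) * ∑ k ∈ F, μ.real {ω | a k.1 ≤ Y k.1 ω} ≤ μ.real U := by
    intro Y hYm hY hYA F
    have h1 : ∀ k : {k : Fin d → ℕ // m ≤ k}, k.1 ∈ Set.Ici (1 : Fin d → ℕ) :=
      fun k => hm.trans k.2
    have h := sum_le_union_of_negCorr μ F (fun k => {ω | a k.1 ≤ Y k.1 ω})
      (fun k _ => measurableSet_le measurable_const (hYm _ (h1 k)))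
      (fun i _ j _ hij => hY.upper_tail hYm a (h1 i) (h1 j) fun h => hij (Subtype.ext h))
    have hsub : μ.real (⋃ k ∈ F, {ω | a k.1 ≤ Y k.1 ω}) ≤ μ.real U := by
      refine measureReal_mono (Set.iUnion₂_subset fun k _ => (hYA k.1).trans ?_)
        (measure_ne_top μ _)
      exact Set.subset_iUnion₂ (s := fun (k : Fin d → ℕ) (_ : m ≤ k) => A k) k.1 k.2
    have hS0 : 0 ≤ ∑ k ∈ F, μ.real {ω | a k.1 ≤ Y k.1 ω} :=
      Finset.sum_nonneg fun _ _ => measureReal_nonneg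
    nlinarith
  have fin : ∀ F : Finset {k : Fin d → ℕ // m ≤ k},
      (1 - μ.real U) * ∑ k ∈ F, μ.real (A k.1) ≤ 2 * μ.real U := by
    intro F
    have hu := side X hmeas hNA (fun k => by rw [hAa k]; exact Set.subset_union_left) F
    have hl := side (fun k ω => -X k ω) (fun k hk => (hmeas k hk).neg) hNA.neg
      (fun k => by rw [hAa k]; exact Set.subset_union_right) F
    have hsum : ∑ k ∈ F, μ.real (A k.1) ≤ ∑ k ∈ F, μ.real {ω | a k.1 ≤ X k.1 ω} +
        ∑ k ∈ F, μ.real {ω | a k.1 ≤ -X k.1 ω} := by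
      rw [← Finset.sum_add_distrib]
      refine Finset.sum_le_sum fun k _ => ?_
      rw [hAa k.1]
      exact measureReal_union_le _ _
    have := mul_le_mul_of_nonneg_left hsum (sub_nonneg.2 hp1)
    linarith
  have hUr : μ U = ENNReal.ofReal (μ.real U) := (ofReal_measureReal (measure_ne_top μ _)).symm
  have h1U : 1 - μ U = ENNReal.ofReal (1 - μ.real U) := by
    rw [hUr, ENNReal.ofReal_sub _ measureReal_nonneg, ENNReal.ofReal_one]
  have hsq : (1 - μ U) ^ 2 ≤ 1 - μ U := by
    rw [sq]
    exact mul_le_of_le_one_left' tsub_le_self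
  refine (mul_le_mul_left hsq _).trans ?_
  rw [← ENNReal.tsum_mul_left]
  rw [ENNReal.tsum_eq_iSup_sum]
  refine iSup_le fun F => ?_
  have hF : ∑ k ∈ F, μ (A k.1) = ENNReal.ofReal (∑ k ∈ F, μ.real (A k.1)) := by
    rw [ENNReal.ofReal_sum_of_nonneg fun _ _ => measureReal_nonneg]
    exact Finset.sum_congr rfl fun k _ => (ofReal_measureReal (measure_ne_top μ _)).symm
  rw [← Finset.mul_sum, hF, h1U, ← ENNReal.ofReal_mul (sub_nonneg.2 hp1), hUr]
  refine (ENNReal.ofReal_le_ofReal (fin F)).trans ?_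
  rw [ENNReal.ofReal_mul (by norm_num)]
  simp
end
end
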